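/- arXiv:2603.03869 — 3 statements merged into one kernel-verified Lean document; each statement's English description precedes it below -/
import Mathlib

section
/- There exist a metric space (M, ρ) that is metrically doubling (there is N ∈ ℕ such that every closed ball of radius r in M can be covered by at most N closed balls of radius r/2) and a map γ : [0,1] → M such that LVar_γ < ∞ while Var_γ = ∞. That is, there is a doubling metric space on which Lipschitz functions do not catch jumps. -/
/-! Lipschitz functions do not catch jumps in a doubling space that has no bi-Lipschitz embedding
into Hilbert space; the space used here is of Laakso type.

Over the real line, at every scale `4⁻ʲ`, the middle half of each interval of length `4⁻ʲ` is
doubled to form a loop. Concretely, the points are `(t, u)` with `u j = ± hgt j t`, where `hgt j` is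
a `4⁻ʲ`-periodic tent function, and the metric is the supremum metric. It is doubling
(`Laakso.doubling`): in a ball of radius `r`, the sign at a scale much larger than `r` can change only
at an end point of a tent, these end points are well separated for different scales, so at most one
large scale matters; small scales contribute less than `r / 2`; and only two scales are comparable
to `r`.

Let `f` be `1`-Lipschitz. Refining the cells by one level raises the mean squared slope of `f` by a
multiple of the mean of `((f a - f b) / ℓ)²`, where `a, b` are the two midpoints of a cell of
length `ℓ` (`Laakso.energy_step`). As squared slopes are at most `1`, over `n²` levels the mean of
`|f a - f b| / ℓ` is of order `1 / n`, whereas `dist a b / ℓ ≥ 1 / 2`. A walk that oscillates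
suitably often between the midpoints of all cells is therefore longer, by a factor of order `n`, than its image under
any such `f` (`Laakso.hasWalk_cell`). Inside tiny cells these walks become loops of length at least
`1` at a fixed point with arbitrarily short Lipschitz images (`Laakso.exists_loop`); concatenating
countably many of them gives the curve. -/

open Set ENNReal

/-- The total variation of `γ` on `[a, b]`:
the supremum over all finite partitions `a = t₀ < t₁ < ⋯ < t_N = b` of
`∑ ρ(γ(t_{i-1}), γ(t_i))`, valued in `[0, ∞]`. -/
noncomputable def Var {M : Type*} [PseudoEMetricSpace M] (a b : ℝ) (γ : ℝ → M) : ℝ≥0∞ :=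
  eVariationOn γ (Set.Icc a b)

/-- The Lipschitz variation of `γ` on `[a, b]`:
`LVar γ = sup { Var (f ∘ γ) : f : M → ℝ is 1-Lipschitz }`. -/
noncomputable def LVar {M : Type*} [PseudoEMetricSpace M] (a b : ℝ) (γ : ℝ → M) : ℝ≥0∞ :=
  ⨆ f : {f : M → ℝ // LipschitzWith 1 f}, Var a b (f.1 ∘ γ)

/-- `LCJ M = inf { LVar γ / Var γ : γ : [a,b] → M, a < b, 0 < Var γ < ∞ }`. -/
noncomputable def LCJ (M : Type*) [PseudoEMetricSpace M] : ℝ≥0∞ :=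
  ⨅ (a : ℝ) (b : ℝ) (_ : a < b) (γ : ℝ → M) (_ : 0 < Var a b γ) (_ : Var a b γ < ⊤),
    LVar a b γ / Var a b γ

/-! ### From walks to curves -/

/-- The length of the walk that starts at `x` and then visits the points of the list in order,
where a jump from `y` to `z` costs `d y z`. -/
def walkCost {M : Type*} (d : M → M → ℝ) : M → List M → ℝ
  | _, [] => 0
  | x, y :: l => d x y + walkCost d y l

lemma walkCost_append {M : Type*} (d : M → M → ℝ) (x : M) (l l' : List M) :
    walkCost d x (l ++ l') = walkCost d x l + walkCost d (l.getLastD x) l' := by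
  induction l generalizing x with
  | nil => simp [walkCost]
  | cons y l ih => simp only [List.cons_append, walkCost, ih, List.getLastD_cons]; ring

lemma walkCost_eq_sum {M : Type*} (d : M → M → ℝ) (o x : M) (l : List M) :
    walkCost d x l =
      ∑ k ∈ Finset.range l.length, d ((x :: l).getD k o) ((x :: l).getD (k + 1) o) := by
  induction l generalizing x with
  | nil => simp [walkCost]
  | cons y l ih =>
    rw [walkCost, ih, List.length_cons, Finset.sum_range_succ', add_comm]
    simp

/-- `HasWalk x y V C`: some finite walk from `x` to `y` has length at least `V`, while its image
under any `1`-Lipschitz `f` has length at most `C f`. -/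
def HasWalk {M : Type*} [MetricSpace M] (x y : M) (V : ℝ) (C : (M → ℝ) → ℝ) : Prop :=
  ∃ l : List M, l.getLastD x = y ∧ V ≤ walkCost dist x l ∧
    ∀ f : M → ℝ, LipschitzWith 1 f → walkCost (fun a b => |f a - f b|) x l ≤ C f

section HasWalk

variable {M : Type*} [MetricSpace M]

lemma HasWalk.trans {x y z : M} {V V' : ℝ} {C C' : (M → ℝ) → ℝ} (h : HasWalk x y V C)
    (h' : HasWalk y z V' C') : HasWalk x z (V + V') (fun f => C f + C' f) := by
  obtain ⟨l, h1, h2, h3⟩ := h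
  obtain ⟨l', h1', h2', h3'⟩ := h'
  refine ⟨l ++ l', ?_, ?_, ?_⟩
  · rw [← h1', ← h1]
    rcases List.eq_nil_or_concat l' with rfl | ⟨l'', a, rfl⟩
    · simp
    · simp
  · rw [walkCost_append, h1]; linarith
  · intro f hf
    rw [walkCost_append, h1]; linarith [h3 f hf, h3' f hf]

lemma HasWalk.mono {x y : M} {V V' : ℝ} {C C' : (M → ℝ) → ℝ} (h : HasWalk x y V C)
    (hV : V' ≤ V) (hC : ∀ f, LipschitzWith 1 f → C f ≤ C' f) : HasWalk x y V' C' := by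
  obtain ⟨l, h1, h2, h3⟩ := h
  exact ⟨l, h1, hV.trans h2, fun f hf => (h3 f hf).trans (hC f hf)⟩

lemma HasWalk.refl (x : M) : HasWalk x x 0 (fun _ => 0) :=
  ⟨[], by simp, by simp [walkCost], by simp [walkCost]⟩

lemma HasWalk.single (x y : M) : HasWalk x y (dist x y) (fun f => |f x - f y|) :=
  ⟨[y], by simp, by simp [walkCost], by simp [walkCost]⟩

lemma LipschitzWith.abs_sub_le_of_one {f : M → ℝ} (hf : LipschitzWith 1 f) (x y : M) :
    |f x - f y| ≤ dist x y := by
  have := hf.dist_le_mul x y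
  simpa [Real.dist_eq] using this

/-- Oscillating `m` times between `a` and `b`. -/
lemma HasWalk.zigzag (a b : M) (m : ℕ) :
    HasWalk a a (2 * m * dist a b) (fun f => 2 * m * |f a - f b|) := by
  induction m with
  | zero => simpa using HasWalk.refl a
  | succ m ih =>
    refine ((ih.trans (HasWalk.single a b)).trans (HasWalk.single b a)).mono ?_ ?_
    · rw [dist_comm b a]; push_cast; linarith
    · intro f _
      rw [abs_sub_comm (f b) (f a)]; push_cast; linarith

/-- A loop at `y` is turned into a loop at a nearby point `x` by going to `y` first and coming
back at the end. -/
lemma HasWalk.excursion {x y : M} {V δ : ℝ} {C : (M → ℝ) → ℝ} (h : HasWalk y y V C)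
    (hd : dist x y ≤ δ) : HasWalk x x V (fun f => C f + 2 * δ) := by
  refine (((HasWalk.single x y).trans h).trans (HasWalk.single y x)).mono ?_ ?_
  · linarith [dist_nonneg (x := x) (y := y), dist_nonneg (x := y) (y := x)]
  · intro f hf
    linarith [hf.abs_sub_le_of_one x y, hf.abs_sub_le_of_one y x, dist_comm x y]

/-- Loops of length at least `1` whose Lipschitz images have lengths at most `1, 1/2, 1/4, …` are
concatenated into one infinite walk. -/
lemma exists_seq_of_loops (o : M) (h : ∀ ε : ℝ, 0 < ε → HasWalk o o 1 (fun _ => ε)) :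
    ∃ x : ℕ → M, (∀ B : ℕ, ∃ n, (B : ℝ) ≤ ∑ k ∈ Finset.range n, dist (x k) (x (k + 1))) ∧
      ∀ f : M → ℝ, LipschitzWith 1 f → ∀ n,
        ∑ k ∈ Finset.range n, |f (x k) - f (x (k + 1))| ≤ 2 := by
  choose l hend hV hC using fun i : ℕ => h ((1 / 2) ^ i) (by positivity)
  let P : ℕ → List M := fun i => Nat.rec [] (fun j L => L ++ l j) i
  have hP0 : P 0 = [] := rfl
  have hPs : ∀ i, P (i + 1) = P i ++ l i := fun i => rfl
  have hPend : ∀ i, (P i).getLastD o = o := by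
    intro i
    induction i with
    | zero => simp [hP0]
    | succ i ih =>
      have h1 := hend i
      rw [hPs]
      rcases List.eq_nil_or_concat (l i) with h0 | ⟨l'', a, h0⟩
      · rw [h0]; simpa using ih
      · rw [h0] at h1 ⊢; simpa using h1
  have hlen : ∀ i, i ≤ (P i).length := by
    intro i
    induction i with
    | zero => simp
    | succ i ih =>
      have : 0 < (l i).length := by
        rw [List.length_pos_iff]
        intro h0
        have := hV i
        rw [h0] at this
        simp only [walkCost] at this
        linarith
      rw [hPs, List.length_append]; omega
  have hpre : ∀ i j, i ≤ j → P i <+: P j := by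
    intro i j hij
    induction hij with
    | refl => exact List.prefix_rfl
    | step _ ih => exact ih.trans (by rw [hPs]; exact List.prefix_append _ _)
  have hcV : ∀ i : ℕ, (i : ℝ) ≤ walkCost dist o (P i) := by
    intro i
    induction i with
    | zero => simp [hP0, walkCost]
    | succ i ih =>
      rw [hPs, walkCost_append, hPend]; push_cast; linarith [hV i]
  have hcC : ∀ f : M → ℝ, LipschitzWith 1 f → ∀ i : ℕ,
      walkCost (fun a b => |f a - f b|) o (P i) ≤ 2 - 2 * (1 / 2) ^ i := by
    intro f hf i
    induction i with
    | zero => simp [hP0, walkCost]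
    | succ i ih =>
      rw [hPs, walkCost_append, hPend, pow_succ]
      linarith [hC i f hf]
  let x : ℕ → M := fun n => (o :: P n).getD n o
  have hx : ∀ i n, n ≤ (P i).length → (o :: P i).getD n o = x n := by
    intro i n hn
    have hn' := hlen n
    cases n with
    | zero => simp [x]
    | succ n =>
      simp only [x, List.getD_cons_succ]
      rcases le_total i (n + 1) with hi | hi
      · obtain ⟨t, ht⟩ := hpre _ _ hi
        rw [← ht, List.getD_append _ _ _ _ (by omega)]
      · obtain ⟨t, ht⟩ := hpre _ _ hi
        rw [← ht, List.getD_append _ _ _ _ (by omega)]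
  have hsum : ∀ (d : M → M → ℝ) i,
      walkCost d o (P i) = ∑ k ∈ Finset.range (P i).length, d (x k) (x (k + 1)) := by
    intro d i
    rw [walkCost_eq_sum d o]
    refine Finset.sum_congr rfl fun k hk => ?_
    have hk := Finset.mem_range.1 hk
    rw [hx i k hk.le, hx i (k + 1) hk]
  refine ⟨x, fun B => ⟨(P B).length, ?_⟩, fun f hf n => ?_⟩
  · rw [← hsum dist]; exact hcV B
  · calc _ ≤ ∑ k ∈ Finset.range (P n).length, |f (x k) - f (x (k + 1))| :=
          Finset.sum_le_sum_of_subset_of_nonneg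
            (Finset.range_subset_range.2 (hlen n)) (fun _ _ _ => abs_nonneg _)
      _ = walkCost (fun a b => |f a - f b|) o (P n) := (hsum (fun a b => |f a - f b|) n).symm
      _ ≤ 2 := by
          have := hcC f hf n
          have h2 : (0 : ℝ) < (1 / 2) ^ n := by positivity
          linarith

/-- An infinite walk `x` is run through on `[0, 1)`, the point `x k` being reached at time
`k / (k + 1)`; at time `1` the curve jumps back to `x 0`. -/
lemma exists_curve_of_seq (x : ℕ → M)
    (hx : ∀ B : ℕ, ∃ n, (B : ℝ) ≤ ∑ k ∈ Finset.range n, dist (x k) (x (k + 1)))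
    (hf : ∀ f : M → ℝ, LipschitzWith 1 f → ∀ n,
        ∑ k ∈ Finset.range n, |f (x k) - f (x (k + 1))| ≤ 2) :
    ∃ γ : ℝ → M, LVar 0 1 γ < ⊤ ∧ Var 0 1 γ = ⊤ := by
  -- At `t = 1` the quotient `t / (1 - t)` has the value `0`.
  let idx : ℝ → ℕ := fun t => ⌊t / (1 - t)⌋₊
  have hidx1 : idx 1 = 0 := by simp [idx]
  have hidx : ∀ s t : ℝ, 0 ≤ s → s ≤ t → t < 1 → idx s ≤ idx t := by
    intro s t hs hst ht
    apply Nat.floor_mono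
    rw [div_le_div_iff₀ (by linarith) (by linarith)]
    nlinarith
  have hidxk : ∀ k : ℕ, idx (k / (k + 1)) = k := by
    intro k
    have h1 : (k : ℝ) / (k + 1) / (1 - k / (k + 1)) = k := by
      have : (k : ℝ) + 1 ≠ 0 := by positivity
      have h2 : (1 : ℝ) - k / (k + 1) = 1 / (k + 1) := by field_simp; ring
      rw [h2]; field_simp
    simp only [idx, h1, Nat.floor_natCast]
  refine ⟨fun t => x (idx t), ?_, ?_⟩
  · refine lt_of_le_of_lt (iSup_le fun f => ?_) (ENNReal.ofReal_lt_top (r := 4))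
    obtain ⟨f, hL⟩ := f
    set S : ℕ → ℝ := fun n => ∑ k ∈ Finset.range n, |f (x k) - f (x (k + 1))| with hS
    have hS2 : ∀ n, S n ≤ 2 := hf f hL
    have hS0 : ∀ n, 0 ≤ S n := fun n => Finset.sum_nonneg fun _ _ => abs_nonneg _
    have hSd : ∀ m n, m ≤ n → |f (x n) - f (x m)| ≤ S n - S m := by
      intro m n hmn
      induction hmn with
      | refl => simp
      | @step n _ ih =>
        have h1 : S (n + 1) = S n + |f (x n) - f (x (n + 1))| := Finset.sum_range_succ _ _
        have h2 := abs_sub_le (f (x (n + 1))) (f (x n)) (f (x m))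
        rw [abs_sub_comm (f (x (n + 1))) (f (x n))] at h2
        simp only [Nat.succ_eq_add_one]
        linarith
    -- The increments of `Φ` dominate those of `f ∘ γ`, also at the final jump.
    let Φ : ℝ → ℝ := fun t => if t = 1 then 4 else S (idx t)
    have hΦ : ∀ s t : ℝ, 0 ≤ s → s ≤ t → t ≤ 1 →
        |f (x (idx t)) - f (x (idx s))| ≤ Φ t - Φ s := by
      intro s t hs hst ht
      by_cases ht1 : t = 1
      · by_cases hs1 : s = 1
        · subst ht1; subst hs1; simp
        · have h1 := hSd 0 (idx s) (Nat.zero_le _)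
          have h0 : S 0 = 0 := by simp [hS]
          simp only [Φ, ht1, hs1, if_true, if_false, hidx1]
          rw [abs_sub_comm]
          linarith [hS2 (idx s)]
      · have ht1' : t < 1 := lt_of_le_of_ne ht ht1
        have hs1 : s ≠ 1 := by linarith
        simp only [Φ, ht1, hs1, if_false]
        exact hSd _ _ (hidx s t hs hst ht1')
    have hΦ0 : ∀ t, 0 ≤ Φ t := by
      intro t; simp only [Φ]; split_ifs
      · norm_num
      · exact hS0 _
    have hΦ4 : ∀ t, Φ t ≤ 4 := by
      intro t; simp only [Φ]; split_ifs
      · norm_num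
      · linarith [hS2 (idx t)]
    refine iSup_le fun p => ?_
    obtain ⟨n, u, hu, hmem⟩ := p
    have hstep : ∀ i, |f (x (idx (u (i + 1)))) - f (x (idx (u i)))| ≤ Φ (u (i + 1)) - Φ (u i) :=
      fun i => hΦ _ _ (hmem i).1 (hu (Nat.le_succ i)) (hmem (i + 1)).2
    calc ∑ i ∈ Finset.range n, edist (f (x (idx (u (i + 1))))) (f (x (idx (u i))))
        ≤ ∑ i ∈ Finset.range n, ENNReal.ofReal (Φ (u (i + 1)) - Φ (u i)) := by
          refine Finset.sum_le_sum fun i _ => ?_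
          rw [edist_dist, Real.dist_eq]
          exact ENNReal.ofReal_le_ofReal (hstep i)
      _ = ENNReal.ofReal (Φ (u n) - Φ (u 0)) := by
          rw [← ENNReal.ofReal_sum_of_nonneg, Finset.sum_range_sub (fun i => Φ (u i))]
          exact fun i _ => (abs_nonneg _).trans (hstep i)
      _ ≤ ENNReal.ofReal 4 := ENNReal.ofReal_le_ofReal (by linarith [hΦ0 (u 0), hΦ4 (u n)])
  · refine ENNReal.eq_top_of_forall_nnreal_le fun r => ?_
    obtain ⟨B, hB⟩ := exists_nat_ge (r : ℝ)
    obtain ⟨n, hn⟩ := hx B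
    have hmono : Monotone fun k : ℕ => (k : ℝ) / (k + 1) := by
      intro a b hab
      have hab' : (a : ℝ) ≤ b := by exact_mod_cast hab
      simp only
      rw [div_le_div_iff₀ (by positivity) (by positivity)]
      linarith
    have hmem : ∀ k : ℕ, (k : ℝ) / (k + 1) ∈ Icc (0 : ℝ) 1 := by
      intro k
      refine ⟨by positivity, ?_⟩
      rw [div_le_one (by positivity)]; linarith
    have key := eVariationOn.sum_le (f := fun t => x (idx t)) (s := Icc (0 : ℝ) 1)
      (n := n) hmono hmem
    refine le_trans ?_ key
    have h1 : ∀ k : ℕ, edist (x (idx (((k + 1 : ℕ) : ℝ) / ((k + 1 : ℕ) + 1))))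
        (x (idx ((k : ℝ) / (k + 1)))) = ENNReal.ofReal (dist (x k) (x (k + 1))) := by
      intro k
      rw [hidxk, hidxk, edist_comm, edist_dist]
    simp only [h1]
    rw [← ENNReal.ofReal_sum_of_nonneg (fun _ _ => dist_nonneg), ← ENNReal.ofReal_coe_nnreal]
    exact ENNReal.ofReal_le_ofReal (hB.trans hn)

end HasWalk

/-! ### The space -/

/-- The `1`-periodic tent with base `[1/4, 3/4]` and height `1/4`. -/
noncomputable def tent (s : ℝ) : ℝ := max 0 (|s - round s| - 1 / 4)

lemma tent_nonneg (s : ℝ) : 0 ≤ tent s := le_max_left _ _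

lemma tent_le (s : ℝ) : tent s ≤ 1 / 4 :=
  max_le (by norm_num) (by linarith [abs_sub_round s])

lemma tent_lipschitz (s t : ℝ) : |tent s - tent t| ≤ |s - t| := by
  have key : ∀ a b : ℝ, |a - round a| ≤ |b - round b| + |a - b| := fun a b => by
    have h1 := round_le a (round b)
    have h2 := abs_sub_le a b (round b)
    linarith
  have h1 := key s t
  have h2 := key t s
  rw [abs_sub_comm t s] at h2
  refine (abs_max_sub_max_le_max _ _ _ _).trans (max_le (by simp) ?_)
  rw [abs_le]; constructor <;> linarith

lemma tent_eq_zero {s : ℝ} (z : ℤ) (h : |s - z| ≤ 1 / 4) : tent s = 0 :=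
  max_eq_left (by linarith [round_le s z])

lemma tent_half (p : ℤ) : tent (p + 1 / 2) = 1 / 4 := by
  refine le_antisymm (tent_le _) (le_trans ?_ (le_max_right _ _))
  have h : (1 : ℝ) / 2 ≤ |(p : ℝ) + 1 / 2 - round ((p : ℝ) + 1 / 2)| := by
    generalize round ((p : ℝ) + 1 / 2) = z
    rcases le_or_gt z p with hz | hz
    · have : (z : ℝ) ≤ p := by exact_mod_cast hz
      exact le_trans (by linarith) (le_abs_self _)
    · have : (p : ℝ) + 1 ≤ z := by exact_mod_cast hz
      exact le_trans (by linarith) (neg_le_abs _)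
  linarith

/-- The tent function at scale `4⁻ʲ`. -/
noncomputable def hgt (j : ℕ) (t : ℝ) : ℝ := tent (4 ^ j * t) / 4 ^ j

lemma hgt_nonneg (j : ℕ) (t : ℝ) : 0 ≤ hgt j t := div_nonneg (tent_nonneg _) (by positivity)

lemma hgt_le (j : ℕ) (t : ℝ) : hgt j t ≤ 1 / 4 / 4 ^ j :=
  div_le_div_of_nonneg_right (tent_le _) (by positivity)

lemma hgt_lipschitz (j : ℕ) (s t : ℝ) : |hgt j s - hgt j t| ≤ |s - t| := by
  have h4 : (0 : ℝ) < 4 ^ j := by positivity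
  rw [hgt, hgt, ← sub_div, abs_div, abs_of_pos h4, div_le_iff₀ h4]
  refine (tent_lipschitz _ _).trans ?_
  rw [← mul_sub, abs_mul, abs_of_pos h4, mul_comm]

/-- The Laakso-type space: points `(t, u)` with `u j = ± hgt j t`, under the supremum metric. All
choices of the `j`-th sign coincide where `hgt j` vanishes, so each interval of length `4⁻ʲ` carries
a loop between its first and third quarter points. -/
abbrev Laakso : Type :=
  {x : ℝ × BoundedContinuousFunction ℕ ℝ // ∀ j, |x.2 j| = hgt j x.1}

namespace Laakso

lemma dist_le_iff {x y : Laakso} {C : ℝ} (hC : 0 ≤ C) :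
    dist x y ≤ C ↔ |x.1.1 - y.1.1| ≤ C ∧ ∀ j, |x.1.2 j - y.1.2 j| ≤ C := by
  rw [Subtype.dist_eq, Prod.dist_eq, max_le_iff, BoundedContinuousFunction.dist_le hC]
  simp [Real.dist_eq]

lemma abs_coord_le {x y : Laakso} (j : ℕ) : |x.1.2 j - y.1.2 j| ≤ dist x y :=
  ((dist_le_iff dist_nonneg).1 le_rfl).2 j

/-- The point over `t` with signs `w`. -/
noncomputable def mk (t : ℝ) (w : ℕ → Bool) : Laakso :=
  ⟨(t, BoundedContinuousFunction.ofNormedAddCommGroup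
      (fun j => if w j then hgt j t else - hgt j t) continuous_of_discreteTopology 1 (by
        intro j
        have h1 : |if w j then hgt j t else - hgt j t| = hgt j t := by
          split_ifs <;> simp [abs_of_nonneg (hgt_nonneg j t)]
        rw [Real.norm_eq_abs, h1]
        refine (hgt_le j t).trans ?_
        rw [div_le_one (by positivity)]
        have : (1 : ℝ) ≤ 4 ^ j := one_le_pow₀ (by norm_num)
        linarith)), by
    intro j
    change |if w j then hgt j t else - hgt j t| = hgt j t
    split_ifs <;> simp [abs_of_nonneg (hgt_nonneg j t)]⟩

lemma mk_fst (t : ℝ) (w : ℕ → Bool) : (mk t w).1.1 = t := rfl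

lemma mk_snd (t : ℝ) (w : ℕ → Bool) (j : ℕ) :
    (mk t w).1.2 j = if w j then hgt j t else - hgt j t := rfl

lemma dist_mk_le (s t : ℝ) (w : ℕ → Bool) : dist (mk s w) (mk t w) ≤ |s - t| := by
  rw [dist_le_iff (abs_nonneg _)]
  refine ⟨le_rfl, fun j => ?_⟩
  rw [mk_snd, mk_snd]
  split_ifs
  · exact hgt_lipschitz j s t
  · rw [neg_sub_neg, abs_sub_comm]; exact hgt_lipschitz j s t

lemma mk_update (t : ℝ) (w : ℕ → Bool) (k : ℕ) (b : Bool) (h : hgt k t = 0) :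
    mk t (Function.update w k b) = mk t w := by
  apply Subtype.ext
  refine Prod.ext rfl ?_
  ext j
  rw [mk_snd, mk_snd]
  by_cases hj : j = k
  · subst hj; simp [h]
  · simp [Function.update_of_ne hj]

/-! ### Doubling -/

lemma coord_sub_le_of_sign {y z : Laakso} {j : ℕ} (h : 0 ≤ y.1.2 j ↔ 0 ≤ z.1.2 j) :
    |y.1.2 j - z.1.2 j| ≤ |y.1.1 - z.1.1| := by
  have hl := hgt_lipschitz j y.1.1 z.1.1
  rw [← y.2 j, ← z.2 j] at hl
  by_cases hy : 0 ≤ y.1.2 j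
  · rwa [abs_of_nonneg hy, abs_of_nonneg (h.1 hy)] at hl
  · have hz : ¬ 0 ≤ z.1.2 j := fun hz => hy (h.2 hz)
    rw [abs_of_neg (not_le.1 hy), abs_of_neg (not_le.1 hz), neg_sub_neg, abs_sub_comm] at hl
    exact hl

/-- Level `j` is critical for the ball of radius `r` at `x` if the `j`-th sign is not constant on
the ball, to the extent that the `j`-th coordinate is not a `1`-Lipschitz function of `t`. -/
def Critical (x : Laakso) (r : ℝ) (j : ℕ) : Prop :=
  ∃ y ∈ Metric.closedBall x r, ∃ z ∈ Metric.closedBall x r,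
    |y.1.1 - z.1.1| < |y.1.2 j - z.1.2 j|

lemma Critical.exists_hgt {x : Laakso} {r : ℝ} {j : ℕ} (h : Critical x r j) :
    ∃ t, |t - x.1.1| ≤ r ∧ 0 < hgt j t ∧ hgt j t ≤ 2 * r := by
  obtain ⟨y, hy, z, hz, hlt⟩ := h
  have hr : 0 ≤ r := dist_nonneg.trans hy
  have hyt := ((dist_le_iff hr).1 hy).1
  have hyz : |y.1.2 j - z.1.2 j| ≤ 2 * r := by
    have h1 := abs_coord_le (x := y) (y := z) j
    have h2 := dist_triangle_right y z x
    have hy' : dist y x ≤ r := hy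
    have hz' : dist z x ≤ r := hz
    linarith
  have hns : ¬ (0 ≤ y.1.2 j ↔ 0 ≤ z.1.2 j) := fun h => absurd (coord_sub_le_of_sign h) (not_le.2 hlt)
  have hl := hgt_lipschitz j y.1.1 z.1.1
  refine ⟨y.1.1, hyt, ?_⟩
  rw [← y.2 j] at hl ⊢
  rw [← z.2 j] at hl
  generalize y.1.2 j = a at *
  generalize z.1.2 j = b at *
  by_cases ha : 0 ≤ a <;> by_cases hb : 0 ≤ b
  · exact absurd (by simp [ha, hb]) hns
  · have hb := not_le.1 hb
    rw [abs_of_nonneg ha]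
    rw [abs_of_nonneg (by linarith)] at hyz
    refine ⟨lt_of_le_of_ne ha ?_, by linarith⟩
    rintro rfl
    simp at hl hlt
    linarith
  · have ha := not_le.1 ha
    rw [abs_of_neg ha]
    rw [abs_of_neg (by linarith)] at hyz
    exact ⟨by linarith, by linarith⟩
  · exact absurd (by simp [ha, hb]) hns

/-- The end points of the tents at a level `i < j` are multiples of `4⁻ʲ`, hence stay away from the
tents at level `j`. So at most one level of scale at least `16 r` is critical. -/
lemma Critical.le_of_coarse {x : Laakso} {r : ℝ} {i j : ℕ} (hi : Critical x r i) (hj : Critical x r j)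
    (hr : 16 * r ≤ (1 / 4) ^ j) : j ≤ i := by
  by_contra! hij
  obtain ⟨s, hs, hs0, hs2⟩ := hi.exists_hgt
  obtain ⟨t, ht, ht0, -⟩ := hj.exists_hgt
  obtain ⟨d, rfl⟩ := Nat.exists_eq_add_of_lt hij
  have h4i : (0 : ℝ) < 4 ^ i := by positivity
  have hst : |t - s| ≤ 2 * r := by
    have := abs_sub_le t x.1.1 s
    rw [abs_sub_comm x.1.1 s] at this
    linarith
  -- `q` is an end point of a tent at level `i`, in units of `4 ^ (-(i + 1))`.
  obtain ⟨q, hq⟩ : ∃ q : ℤ, |4 ^ (i + 1) * s - q| ≤ 4 ^ (i + 1) * (2 * r) := by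
    have hpos : 0 < tent (4 ^ i * s) := by
      by_contra hcon
      have h0 : tent (4 ^ i * s) = 0 := le_antisymm (not_lt.1 hcon) (tent_nonneg _)
      simp [hgt, h0] at hs0
    have hle : tent (4 ^ i * s) ≤ 4 ^ i * (2 * r) := by
      rw [hgt, div_le_iff₀ h4i] at hs2; linarith
    have h1 : 1 / 4 < |4 ^ i * s - round (4 ^ i * s)| := by
      by_contra hcon
      rw [tent_eq_zero _ (not_lt.1 hcon)] at hpos
      exact lt_irrefl _ hpos
    have h2 : |4 ^ i * s - round (4 ^ i * s)| - 1 / 4 ≤ 4 ^ i * (2 * r) :=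
      (le_max_right _ _).trans hle
    generalize round (4 ^ i * s) = z at h1 h2
    rcases le_total 0 (4 ^ i * s - z) with hz | hz
    · rw [abs_of_nonneg hz] at h1 h2
      refine ⟨4 * z + 1, ?_⟩
      push_cast
      rw [pow_succ, abs_le]; constructor <;> linarith
    · rw [abs_of_nonpos hz] at h1 h2
      refine ⟨4 * z - 1, ?_⟩
      push_cast
      rw [pow_succ, abs_le]; constructor <;> linarith
  have h4d : (0 : ℝ) < 4 ^ d := by positivity
  have hzero : tent (4 ^ (i + d + 1) * t) = 0 := by
    refine tent_eq_zero (4 ^ d * q) ?_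
    have e1 : (4 : ℝ) ^ (i + d + 1) = 4 ^ d * 4 ^ (i + 1) := by rw [← pow_add]; congr 1; omega
    have h4 : (0 : ℝ) < 4 ^ (i + 1) := by positivity
    have e2 : (4 : ℝ) ^ (i + d + 1) * t - ((4 ^ d * q : ℤ) : ℝ)
        = 4 ^ (i + d + 1) * (t - s) + 4 ^ d * (4 ^ (i + 1) * s - q) := by
      push_cast; rw [e1]; ring
    have hr' : 16 * r * 4 ^ (i + d + 1) ≤ 1 := by
      rwa [one_div, inv_pow, ← one_div, le_div_iff₀ (by positivity)] at hr
    rw [e2]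
    refine (abs_add_le _ _).trans ?_
    rw [abs_mul, abs_mul, abs_of_pos h4d, abs_of_pos (by positivity : (0 : ℝ) < 4 ^ (i + d + 1))]
    have b1 : (4 : ℝ) ^ (i + d + 1) * |t - s| ≤ 4 ^ (i + d + 1) * (2 * r) := by gcongr
    have b2 : (4 : ℝ) ^ d * |4 ^ (i + 1) * s - q| ≤ 4 ^ d * (4 ^ (i + 1) * (2 * r)) := by gcongr
    rw [← mul_assoc, ← e1] at b2
    linarith
  simp [hgt, hzero] at ht0

/-- If finitely many colours suffice to make points of equal colour `ε`-close, then as many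
`ε`-balls cover the set. -/
lemma exists_cover_of_colouring {M K : Type*} [MetricSpace M] (B : Set M) (c : M → K)
    (T : Finset K) (hc : ∀ y ∈ B, c y ∈ T) {ε : ℝ}
    (hε : ∀ y ∈ B, ∀ z ∈ B, c y = c z → dist y z ≤ ε) :
    ∃ s : Finset M, s.card ≤ T.card ∧ B ⊆ ⋃ y ∈ s, Metric.closedBall y ε := by
  classical
  rcases B.eq_empty_or_nonempty with rfl | ⟨x, -⟩
  · exact ⟨∅, by simp, by simp⟩
  let rep : K → M := fun k => if h : ∃ y ∈ B, c y = k then h.choose else x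
  refine ⟨T.image rep, Finset.card_image_le, fun y hy => ?_⟩
  have h : ∃ z ∈ B, c z = c y := ⟨y, hy, rfl⟩
  have hrep : rep (c y) = h.choose := dif_pos h
  simp only [mem_iUnion, Metric.mem_closedBall]
  refine ⟨rep (c y), Finset.mem_image_of_mem _ (hc y hy), ?_⟩
  rw [hrep]
  exact hε _ hy _ h.choose_spec.1 h.choose_spec.2.symm

theorem doubling (x : Laakso) (r : ℝ) : ∃ s : Finset Laakso, s.card ≤ 40 ∧
    Metric.closedBall x r ⊆ ⋃ y ∈ s, Metric.closedBall y (r / 2) := by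
  classical
  rcases le_or_gt r 0 with hr | hr
  · refine ⟨{x}, by simp, fun y hy => ?_⟩
    have hy' : dist y x ≤ r := hy
    have h0 := dist_nonneg (x := y) (y := x)
    simp only [Finset.mem_singleton, iUnion_iUnion_eq_left, Metric.mem_closedBall]
    linarith
  have hex : ∃ j : ℕ, (1 / 4 : ℝ) ^ j < 16 * r :=
    exists_pow_lt_of_lt_one (by linarith) (by norm_num)
  let j₀ := Nat.find hex
  have hj₀ : (1 / 4 : ℝ) ^ j₀ < 16 * r := Nat.find_spec hex
  have hcoarse : ∀ j < j₀, 16 * r ≤ (1 / 4 : ℝ) ^ j := fun j hj => not_lt.1 (Nat.find_min hex hj)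
  obtain ⟨m, hm⟩ : ∃ m, ∀ j < j₀, Critical x r j → j = m := by
    by_cases h : ∃ m < j₀, Critical x r m
    · obtain ⟨m, hm, hcm⟩ := h
      refine ⟨m, fun j hj hcj => ?_⟩
      have h1 := hcm.le_of_coarse hcj (hcoarse j hj)
      have h2 := hcj.le_of_coarse hcm (hcoarse m hm)
      omega
    · exact ⟨0, fun j hj hcj => absurd ⟨j, hj, hcj⟩ h⟩
  -- The colour of a point: the cell of length `r / 2` containing `t`, and the signs at the critical
  -- coarse level and at the two levels of scale between `r` and `16 r`.
  let c : Laakso → ℤ × Bool × Bool × Bool := fun y =>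
    (⌊(y.1.1 - x.1.1) / (r / 2)⌋, decide (0 ≤ y.1.2 m), decide (0 ≤ y.1.2 j₀),
      decide (0 ≤ y.1.2 (j₀ + 1)))
  have hcard : (Finset.Icc (-2 : ℤ) 2 ×ˢ (Finset.univ : Finset (Bool × Bool × Bool))).card = 40 := by
    decide
  rw [← hcard]
  refine exists_cover_of_colouring _ c _ ?_ ?_
  · intro y hy
    have h1 := abs_le.1 ((dist_le_iff hr.le).1 hy).1
    simp only [c, Finset.mem_product, Finset.mem_Icc, Finset.mem_univ, and_true]
    constructor
    · rw [Int.le_floor, le_div_iff₀ (by linarith)]; push_cast; linarith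
    · rw [← Int.lt_add_one_iff, Int.floor_lt, div_lt_iff₀ (by linarith)]; push_cast; linarith
  · intro y hy z hz hyz
    simp only [c, Prod.mk.injEq, decide_eq_decide] at hyz
    obtain ⟨hfl, hsm, hs0, hs1⟩ := hyz
    have ht : |y.1.1 - z.1.1| ≤ r / 2 := by
      have h := Int.abs_sub_lt_one_of_floor_eq_floor hfl
      rw [← sub_div, abs_div, abs_of_pos (by linarith : 0 < r / 2), div_lt_one (by linarith)] at h
      have e : y.1.1 - x.1.1 - (z.1.1 - x.1.1) = y.1.1 - z.1.1 := by ring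
      rw [e] at h
      exact h.le
    refine (dist_le_iff (by linarith)).2 ⟨ht, fun j => ?_⟩
    by_cases hjm : j = m
    · subst hjm; exact (coord_sub_le_of_sign hsm).trans ht
    by_cases hj0 : j = j₀
    · rw [hj0]; exact (coord_sub_le_of_sign hs0).trans ht
    by_cases hj1 : j = j₀ + 1
    · rw [hj1]; exact (coord_sub_le_of_sign hs1).trans ht
    by_cases hlt : j < j₀
    · refine le_trans (not_lt.1 fun hcr => hjm (hm j hlt ⟨y, hy, z, hz, hcr⟩)) ht
    · have h2 : j₀ + 2 ≤ j := by omega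
      have hp : (1 / 4 : ℝ) ^ j ≤ (1 / 4) ^ (j₀ + 2) :=
        pow_le_pow_of_le_one (by norm_num) (by norm_num) h2
      rw [pow_add] at hp
      have e : (1 : ℝ) / 4 / 4 ^ j = 1 / 4 * (1 / 4) ^ j := by
        rw [div_eq_mul_inv (1 / 4 : ℝ) (4 ^ j), one_div_pow, one_div (4 ^ j : ℝ)]
      have hy1 := hgt_le j y.1.1
      have hz1 := hgt_le j z.1.1
      rw [← y.2 j, e] at hy1
      rw [← z.2 j, e] at hz1
      have := abs_sub (y.1.2 j) (z.1.2 j)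
      linarith

/-! ### Loops that Lipschitz functions barely see -/

/-- The point over `p / 4 ^ k` with signs `w`; for fixed `k` and `w`, consecutive points are the end
points of the cells of level `k`. -/
noncomputable def pt (k : ℕ) (p : ℤ) (w : ℕ → Bool) : Laakso := mk (p / 4 ^ k) w

lemma hgt_quarter (k : ℕ) (p i : ℤ) :
    hgt k (((4 * p + i : ℤ) : ℝ) / 4 ^ (k + 1)) = tent (p + i / 4) / 4 ^ k := by
  rw [hgt]
  congr 2
  push_cast
  rw [pow_succ]
  field_simp

lemma pt_four_mul (k : ℕ) (p : ℤ) (w : ℕ → Bool) : pt (k + 1) (4 * p) w = pt k p w := by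
  rw [pt, pt]
  congr 1
  push_cast
  rw [pow_succ]
  field_simp

lemma pt_update {k : ℕ} {p i : ℤ} (w : ℕ → Bool) (b : Bool) (z : ℤ)
    (h : |(p : ℝ) + i / 4 - z| ≤ 1 / 4) :
    pt (k + 1) (4 * p + i) (Function.update w k b) = pt (k + 1) (4 * p + i) w := by
  apply mk_update
  rw [hgt_quarter, tent_eq_zero z h, zero_div]

lemma dist_pt_le (k : ℕ) (p q : ℤ) (w : ℕ → Bool) :
    dist (pt k p w) (pt k q w) ≤ |(p : ℝ) - q| / 4 ^ k := by
  refine (dist_mk_le _ _ _).trans ?_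
  rw [← sub_div, abs_div, abs_of_pos (by positivity : (0 : ℝ) < 4 ^ k)]

lemma dist_mid (k : ℕ) (p : ℤ) (w : ℕ → Bool) :
    1 / 4 ^ k / 2 ≤ dist (pt (k + 1) (4 * p + 2) (Function.update w k true))
      (pt (k + 1) (4 * p + 2) (Function.update w k false)) := by
  refine le_trans ?_ (abs_coord_le k)
  rw [pt, pt, mk_snd, mk_snd]
  simp only [Function.update_self, if_true, Bool.false_eq_true, if_false]
  have h : tent ((p : ℝ) + (2 : ℤ) / 4) = 1 / 4 := by
    rw [← tent_half p]; norm_num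
  rw [hgt_quarter, h]
  refine le_trans (le_of_eq ?_) (le_abs_self _)
  ring

/-- The parallelogram identity on the loop `P, A, Q, B`, followed by the Cauchy–Schwarz inequality
along `S, P, (A + B) / 2, Q, T`, and `|x| ≤ L x² + 1 / (4 L)` for `x = (A - B) / ℓ`. -/
lemma energy_step {S P A B Q T L ℓ N : ℝ} (hL : 0 < L) (hl : 0 < ℓ) :
    2 * |A - B| +
      2 * (L * ((ℓ / 4) ^ 2 - (P - S) ^ 2) / (2 * (ℓ / 4)) + N * (ℓ / 4) / (4 * L)) +
      (L * ((ℓ / 4) ^ 2 - (A - P) ^ 2) / (2 * (ℓ / 4)) + N * (ℓ / 4) / (4 * L)) +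
      (L * ((ℓ / 4) ^ 2 - (B - P) ^ 2) / (2 * (ℓ / 4)) + N * (ℓ / 4) / (4 * L)) +
      (L * ((ℓ / 4) ^ 2 - (Q - A) ^ 2) / (2 * (ℓ / 4)) + N * (ℓ / 4) / (4 * L)) +
      (L * ((ℓ / 4) ^ 2 - (Q - B) ^ 2) / (2 * (ℓ / 4)) + N * (ℓ / 4) / (4 * L)) +
      2 * (L * ((ℓ / 4) ^ 2 - (T - Q) ^ 2) / (2 * (ℓ / 4)) + N * (ℓ / 4) / (4 * L)) ≤
    2 * (L * (ℓ ^ 2 - (T - S) ^ 2) / (2 * ℓ) + (N + 1) * ℓ / (4 * L)) := by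
  have h1 : 2 * |A - B| ≤ 2 * L * (A - B) ^ 2 / ℓ + ℓ / (2 * L) := by
    rw [← sq_abs (A - B)]
    have h : 2 * L * |A - B| ^ 2 / ℓ + ℓ / (2 * L) - 2 * |A - B|
        = (2 * L * |A - B| - ℓ) ^ 2 / (2 * L * ℓ) := by field_simp; ring
    have h' : 0 ≤ (2 * L * |A - B| - ℓ) ^ 2 / (2 * L * ℓ) := by positivity
    linarith
  have h2 : 0 ≤ L / ℓ * (2 * (2 * (P - S) ^ 2 + (A - P) ^ 2 + (B - P) ^ 2 + (Q - A) ^ 2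
      + (Q - B) ^ 2 + 2 * (T - Q) ^ 2) - 2 * (A - B) ^ 2 - (T - S) ^ 2) := by
    refine mul_nonneg (by positivity) ?_
    nlinarith [sq_nonneg ((P - S) - ((A + B) / 2 - P)), sq_nonneg ((P - S) - (Q - (A + B) / 2)),
      sq_nonneg ((P - S) - (T - Q)), sq_nonneg (((A + B) / 2 - P) - (Q - (A + B) / 2)),
      sq_nonneg (((A + B) / 2 - P) - (T - Q)), sq_nonneg ((Q - (A + B) / 2) - (T - Q))]
  have e : 2 * (L * (ℓ ^ 2 - (T - S) ^ 2) / (2 * ℓ) + (N + 1) * ℓ / (4 * L)) -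
      (2 * (L * ((ℓ / 4) ^ 2 - (P - S) ^ 2) / (2 * (ℓ / 4)) + N * (ℓ / 4) / (4 * L)) +
      (L * ((ℓ / 4) ^ 2 - (A - P) ^ 2) / (2 * (ℓ / 4)) + N * (ℓ / 4) / (4 * L)) +
      (L * ((ℓ / 4) ^ 2 - (B - P) ^ 2) / (2 * (ℓ / 4)) + N * (ℓ / 4) / (4 * L)) +
      (L * ((ℓ / 4) ^ 2 - (Q - A) ^ 2) / (2 * (ℓ / 4)) + N * (ℓ / 4) / (4 * L)) +
      (L * ((ℓ / 4) ^ 2 - (Q - B) ^ 2) / (2 * (ℓ / 4)) + N * (ℓ / 4) / (4 * L)) +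
      2 * (L * ((ℓ / 4) ^ 2 - (T - Q) ^ 2) / (2 * (ℓ / 4)) + N * (ℓ / 4) / (4 * L))) =
      2 * L * (A - B) ^ 2 / ℓ + ℓ / (2 * L) +
      L / ℓ * (2 * (2 * (P - S) ^ 2 + (A - P) ^ 2 + (B - P) ^ 2 + (Q - A) ^ 2
        + (Q - B) ^ 2 + 2 * (T - Q) ^ 2) - 2 * (A - B) ^ 2 - (T - S) ^ 2) := by
    field_simp
    ring
  linarith

/-- The tour of a cell of level `k`, of length `ℓ = 4⁻ᵏ`, down to `N` further levels: it oscillates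
`K * 2 ^ (N - 1)` times between the two midpoints of the cell and then tours the eight subcells.
Its length grows linearly with `N`. Under a Lipschitz `f` the growth is charged to the energy: the
image length is controlled by `1 - σ²`, where `σ` is the slope of `f` across the cell, because
by `energy_step` the mean of `σ²` over the subcells exceeds `σ²` by a multiple of the squared
difference of `f` at the midpoints. The last summand bounds the cost of moving between subcells. -/
lemma hasWalk_cell (K : ℕ) {L : ℝ} (hL : 0 < L) (N : ℕ) : ∀ (k : ℕ) (p : ℤ) (w : ℕ → Bool),
    HasWalk (pt k p w) (pt k p w) (K * 2 ^ N * (N * (1 / 4 ^ k) / 2))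
      (fun f => K * 2 ^ N *
        (L * ((1 / 4 ^ k) ^ 2 - (f (pt k (p + 1) w) - f (pt k p w)) ^ 2) / (2 * (1 / 4 ^ k))
          + N * (1 / 4 ^ k) / (4 * L)) + 18 * (2 ^ N - 1) * (1 / 4 ^ k)) := by
  induction N with
  | zero =>
    intro k p w
    refine (HasWalk.refl _).mono (by simp) fun f hf => ?_
    have h1 := (hf.abs_sub_le_of_one (pt k (p + 1) w) (pt k p w)).trans (dist_pt_le k (p + 1) p w)
    push_cast at h1
    rw [add_sub_cancel_left, abs_one] at h1
    have h2 := sq_le_sq.2 (h1.trans (le_abs_self _))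
    have h3 : 0 ≤ (1 / 4 ^ k) ^ 2 - (f (pt k (p + 1) w) - f (pt k p w)) ^ 2 := by linarith
    simp only [pow_zero, sub_self, mul_zero, zero_mul, add_zero, Nat.cast_zero, zero_div, mul_one]
    positivity
  | succ N ih =>
    intro k p w
    set ℓ : ℝ := 1 / 4 ^ k with hl
    have hl0 : 0 < ℓ := by positivity
    have hl4 : (1 : ℝ) / 4 ^ (k + 1) = ℓ / 4 := by rw [hl, pow_succ]; field_simp
    have hS : ∀ b, pt (k + 1) (4 * p) (Function.update w k b) = pt k p w := by
      intro b
      rw [← pt_four_mul k p w]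
      simpa using pt_update (i := 0) (k := k) (p := p) w b p (by norm_num)
    have hP : ∀ b, pt (k + 1) (4 * p + 1) (Function.update w k b) = pt (k + 1) (4 * p + 1) w :=
      fun b => pt_update w b p (by norm_num [abs_le])
    have hQ : ∀ b, pt (k + 1) (4 * p + 3) (Function.update w k b) = pt (k + 1) (4 * p + 3) w :=
      fun b => pt_update w b (p + 1) (by push_cast; rw [abs_le]; constructor <;> linarith)
    have hT : ∀ b, pt (k + 1) (4 * p + 4) (Function.update w k b) = pt k (p + 1) w := by
      intro b
      rw [← pt_four_mul k (p + 1) w, show 4 * (p + 1) = 4 * p + 4 by ring]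
      exact pt_update w b (p + 1) (by push_cast; rw [abs_le]; constructor <;> linarith)
    have hdist : ∀ (i : ℤ) (b : Bool), 0 ≤ i → i ≤ 4 →
        dist (pt k p w) (pt (k + 1) (4 * p + i) (Function.update w k b)) ≤ ℓ := by
      intro i b hi0 hi4
      have hi0' : (0 : ℝ) ≤ i := by exact_mod_cast hi0
      have hi4' : (i : ℝ) ≤ 4 := by exact_mod_cast hi4
      rw [← hS b]
      refine (dist_pt_le _ _ _ _).trans ?_
      have e : |((4 * p : ℤ) : ℝ) - ((4 * p + i : ℤ) : ℝ)| = i := by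
        push_cast
        rw [sub_add_cancel_left, abs_neg, abs_of_nonneg hi0']
      rw [e, div_eq_mul_one_div, hl4]
      nlinarith
    have child : ∀ (i : ℤ) (b : Bool), 0 ≤ i → i ≤ 4 → _ :=
      fun i b h0 h4 => (ih (k + 1) (4 * p + i) (Function.update w k b)).excursion (hdist i b h0 h4)
    have zz := (HasWalk.zigzag (pt (k + 1) (4 * p + 2) (Function.update w k true))
      (pt (k + 1) (4 * p + 2) (Function.update w k false)) (K * 2 ^ N)).excursion
        (hdist 2 true (by norm_num) (by norm_num))
    refine (((((((((zz.trans (child 0 true (by norm_num) (by norm_num))).trans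
      (child 0 false (by norm_num) (by norm_num))).trans
      (child 1 true (by norm_num) (by norm_num))).trans
      (child 1 false (by norm_num) (by norm_num))).trans
      (child 2 true (by norm_num) (by norm_num))).trans
      (child 2 false (by norm_num) (by norm_num))).trans
      (child 3 true (by norm_num) (by norm_num))).trans
      (child 3 false (by norm_num) (by norm_num)))).mono ?_ ?_
    · have hm := dist_mid k p w
      rw [← hl] at hm
      have hm' := mul_le_mul_of_nonneg_left hm (by positivity : (0 : ℝ) ≤ 2 * (K * 2 ^ N))
      rw [hl4]
      push_cast
      rw [pow_succ (2 : ℝ) N]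
      linarith
    · intro f _
      have r2 : 4 * p + 1 + 1 = 4 * p + 2 := by ring
      have r3 : 4 * p + 2 + 1 = 4 * p + 3 := by ring
      have r4 : 4 * p + 3 + 1 = 4 * p + 4 := by ring
      simp only [add_zero, r2, r3, r4, hS, hP, hQ, hT, hl4]
      have key := mul_le_mul_of_nonneg_left (energy_step (S := f (pt k p w))
        (P := f (pt (k + 1) (4 * p + 1) w))
        (A := f (pt (k + 1) (4 * p + 2) (Function.update w k true)))
        (B := f (pt (k + 1) (4 * p + 2) (Function.update w k false)))
        (Q := f (pt (k + 1) (4 * p + 3) w)) (T := f (pt k (p + 1) w)) (N := N) hL hl0)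
        (by positivity : (0 : ℝ) ≤ K * 2 ^ N)
      push_cast
      rw [pow_succ (2 : ℝ) N]
      linarith

/-- With `N = n ^ 2` levels and `L = n`, the tour has length of order `n` times that of its
Lipschitz images. Inside a small cell, taking many oscillations brings the length to the order of
`1` and makes the moves between subcells negligible. -/
lemma exists_loop (ε : ℝ) (hε : 0 < ε) :
    HasWalk (mk 0 fun _ => true) (mk 0 fun _ => true) 1 (fun _ => ε) := by
  obtain ⟨n, hn⟩ := exists_nat_gt (3 / ε)
  have hn0 : (0 : ℝ) < n := lt_trans (by positivity) hn
  set c : ℝ := 2 ^ (n ^ 2) * (3 * n / 4 + 18) with hc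
  have hc0 : 0 < c := by positivity
  obtain ⟨k, hk⟩ := exists_pow_lt_of_lt_one (show 0 < ε / 2 / c by positivity)
    (show (1 / 4 : ℝ) < 1 by norm_num)
  rw [one_div_pow, lt_div_iff₀ hc0] at hk
  set ℓ : ℝ := 1 / 4 ^ k with hl
  have hl0 : 0 < ℓ := by positivity
  set a : ℝ := 2 ^ (n ^ 2) * ℓ with ha
  have ha0 : 0 < a := by positivity
  set K : ℕ := ⌈2 / (n : ℝ) ^ 2 / a⌉₊ with hK
  have hK1 : 2 / (n : ℝ) ^ 2 ≤ K * a := by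
    rw [← div_le_iff₀ ha0]; exact Nat.le_ceil _
  have hK2 : K * a ≤ 2 / (n : ℝ) ^ 2 + a := by
    have h := (Nat.ceil_lt_add_one (show 0 ≤ 2 / (n : ℝ) ^ 2 / a by positivity)).le
    calc K * a ≤ (2 / (n : ℝ) ^ 2 / a + 1) * a := by gcongr
      _ = 2 / (n : ℝ) ^ 2 + a := by field_simp
  have hw := hasWalk_cell K hn0 (n ^ 2) k 0 (fun _ => true)
  have h0 : pt k 0 (fun _ => true) = mk 0 fun _ => true := by simp [pt]
  rw [h0, ← hl] at hw
  refine hw.mono ?_ fun f _ => ?_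
  · have h1 : 1 = 2 / (n : ℝ) ^ 2 * ((n : ℝ) ^ 2 / 2) := by field_simp
    have h2 : (K : ℝ) * 2 ^ (n ^ 2) * (((n ^ 2 : ℕ) : ℝ) * ℓ / 2) = K * a * ((n : ℝ) ^ 2 / 2) := by
      push_cast; rw [ha]; ring
    rw [h2]
    calc (1 : ℝ) = 2 / (n : ℝ) ^ 2 * ((n : ℝ) ^ 2 / 2) := h1
      _ ≤ _ := by gcongr
  · generalize f (pt k (0 + 1) fun _ => true) - f (mk 0 fun _ => true) = x
    have h1 : (n : ℝ) * (ℓ ^ 2 - x ^ 2) / (2 * ℓ) + ((n ^ 2 : ℕ) : ℝ) * ℓ / (4 * n)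
        ≤ ℓ * (3 * n / 4) := by
      have e : ℓ * (3 * n / 4) - ((n : ℝ) * (ℓ ^ 2 - x ^ 2) / (2 * ℓ)
          + ((n ^ 2 : ℕ) : ℝ) * ℓ / (4 * n)) = n * x ^ 2 / (2 * ℓ) := by
        push_cast; field_simp; ring
      have : 0 ≤ n * x ^ 2 / (2 * ℓ) := by positivity
      linarith
    have h2 : (3 : ℝ) / n < ε := by rwa [div_lt_comm₀ hn0 hε]
    calc _ ≤ K * 2 ^ (n ^ 2) * (ℓ * (3 * n / 4)) + 18 * (2 ^ (n ^ 2) - 1) * ℓ := by gcongr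
      _ = K * a * (3 * n / 4) + 18 * a - 18 * ℓ := by rw [ha]; ring
      _ ≤ (2 / (n : ℝ) ^ 2 + a) * (3 * n / 4) + 18 * a := by
          have : K * a * (3 * n / 4) ≤ (2 / (n : ℝ) ^ 2 + a) * (3 * n / 4) := by gcongr
          linarith
      _ = 3 / n / 2 + ℓ * c := by rw [hc, ha]; field_simp; ring
      _ ≤ ε := by linarith

end Laakso

/-- There is a metrically doubling metric space `M` and a map `γ : [0,1] → M` with
`LVar γ < ∞` but `Var γ = ∞`: a doubling space on which Lipschitz functions do not
catch jumps. -/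
theorem doubling_not_catching_jumps :
    ∃ (M : Type) (_ : MetricSpace M),
      (∃ N : ℕ, ∀ (x : M) (r : ℝ), ∃ s : Finset M, s.card ≤ N ∧
        Metric.closedBall x r ⊆ ⋃ y ∈ s, Metric.closedBall y (r / 2)) ∧
      ∃ γ : ℝ → M, LVar 0 1 γ < ⊤ ∧ Var 0 1 γ = ⊤ := by
  obtain ⟨x, hx, hf⟩ := exists_seq_of_loops (Laakso.mk 0 fun _ => true) Laakso.exists_loop
  exact ⟨Laakso, inferInstance, ⟨40, Laakso.doubling⟩, exists_curve_of_seq x hx hf⟩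
end

section
/- There exists a universal constant C > 0 with the following property. For every integer N ≥ 2, let 𝒯_N be the complete rooted binary tree of depth N, realized as the set of binary strings of length at most N with the graph metric d(u,v) = |u| + |v| − 2|u ∧ v|, where |u| is the length of u and u ∧ v is the longest common prefix of u and v. Then there exists a map γ : [0,1] → 𝒯_N with 0 < Var_γ < ∞ and LVar_γ ≤ C (log N)^{-1/2} · Var_γ. In particular, LCJ(𝒯_N) ≤ C (log N)^{-1/2}. -/
/-!
Consider a random descent in the binary tree of depth `2 ^ K`, where `K` is the integer part of
`log₂ N`. For each scale `2 ^ k` with `k < K`, and each dyadic block of `2 ^ (k + 1)` consecutive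
levels, take two copies of the descent that agree up to the middle of the block and run
independently to its end. Their end points are at expected distance at least `2 ^ k`
(`le_avg_treeDist`), so over all blocks and scales the total distance is at least `K 2 ^ K / 2`
(`le_pairSum_treeDist`).

For a real `1`-Lipschitz function `f`, the line is Markov `2`-convex: by the fork inequality, the
normalised mean squared displacement of `f` over a block is at most the sum of the two displacements
over its halves minus a multiple of the mean squared difference of `f` on the forking pair
(`rootEnergy_succ`). Telescoping over the scales bounds the suitably normalised squared differences
by `O(2 ^ K)`, and the arithmetic-geometric mean inequality turns this into a bound `O(√K 2 ^ K)` for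
the sum of the differences `|f x - f w|` over all pairs (`pairSum_abs_le`). This is smaller by a
factor `O(1 / √K)` than the total distance.

The averages are rational combinations of finitely many pairs, hence proportional to a sum over a
list of pairs (`realizable_pairSum`). A path that jumps back and forth many times between the members
of each pair before moving to the next one has the same ratio of variations, up to a factor of `2`
(`exists_path`).
-/

open Set ENNReal

/-- Longest common prefix of two binary strings. -/
def lcp : List Bool → List Bool → List Bool
  | a :: u, b :: v => if a = b then a :: lcp u v else []
  | _, _ => []

lemma lcp_nil_left (v : List Bool) : lcp [] v = [] := by cases v <;> rfl

lemma lcp_nil_right (u : List Bool) : lcp u [] = [] := by cases u <;> rfl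

lemma lcp_cons (a b : Bool) (u v : List Bool) :
    lcp (a :: u) (b :: v) = if a = b then a :: lcp u v else [] := rfl

lemma lcp_self : ∀ u : List Bool, lcp u u = u
  | [] => rfl
  | a :: u => by simp [lcp_cons, lcp_self u]

lemma lcp_comm : ∀ u v : List Bool, lcp u v = lcp v u
  | [], v => by simp [lcp_nil_left, lcp_nil_right]
  | _ :: _, [] => by simp [lcp_nil_left, lcp_nil_right]
  | a :: u, b :: v => by
    by_cases h : a = b
    · subst h; simp [lcp_cons, lcp_comm u v]
    · simp [lcp_cons, h, Ne.symm h]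

lemma lcp_prefix_left : ∀ u v : List Bool, lcp u v <+: u
  | [], v => by simp [lcp_nil_left]
  | _ :: _, [] => by simp [lcp_nil_right]
  | a :: u, b :: v => by
    by_cases h : a = b
    · rw [lcp_cons, if_pos h]
      exact List.cons_prefix_cons.mpr ⟨rfl, lcp_prefix_left u v⟩
    · simp [lcp_cons, h]

lemma lcp_prefix_right (u v : List Bool) : lcp u v <+: v := by
  rw [lcp_comm]; exact lcp_prefix_left v u

lemma lcp_length_le_left (u v : List Bool) : (lcp u v).length ≤ u.length :=
  (lcp_prefix_left u v).length_le

lemma lcp_length_le_right (u v : List Bool) : (lcp u v).length ≤ v.length :=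
  (lcp_prefix_right u v).length_le

lemma lcp_triangle : ∀ u v w : List Bool,
    min (lcp u v).length (lcp v w).length ≤ (lcp u w).length
  | [], _, _ => by simp [lcp_nil_left]
  | _ :: _, [], _ => by simp [lcp_nil_right]
  | _ :: _, _ :: _, [] => by simp [lcp_nil_right]
  | a :: u, b :: v, c :: w => by
    by_cases hab : a = b
    · by_cases hbc : b = c
      · subst hab; subst hbc
        have := lcp_triangle u v w
        simp only [lcp_cons, if_true, eq_self_iff_true, List.length_cons]
        omega
      · rw [lcp_cons (b := b), lcp_cons (b := c), if_pos hab, if_neg hbc]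
        simp
    · rw [lcp_cons (b := b), if_neg hab]
      simp


/-- The graph distance on the dyadic tree realized on binary strings:
`d(u,v) = |u| + |v| - 2|u ∧ v|`. -/
noncomputable def treeDist (u v : List Bool) : ℝ :=
  (u.length + v.length : ℝ) - 2 * (lcp u v).length

lemma treeDist_self (u : List Bool) : treeDist u u = 0 := by
  simp [treeDist, lcp_self]; ring

lemma treeDist_comm (u v : List Bool) : treeDist u v = treeDist v u := by
  simp [treeDist, lcp_comm u v]; ring

lemma treeDist_triangle (u v w : List Bool) :
    treeDist u w ≤ treeDist u v + treeDist v w := by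
  have h2 : ((lcp u v).length : ℝ) ≤ v.length := by exact_mod_cast lcp_length_le_right u v
  have h4 : ((lcp v w).length : ℝ) ≤ v.length := by exact_mod_cast lcp_length_le_left v w
  have h5 : min ((lcp u v).length : ℝ) ((lcp v w).length : ℝ) ≤ ((lcp u w).length : ℝ) := by
    have := lcp_triangle u v w
    exact_mod_cast this
  simp only [treeDist]
  rcases le_total ((lcp u v).length : ℝ) ((lcp v w).length : ℝ) with h | h
  · rw [min_eq_left h] at h5; linarith
  · rw [min_eq_right h] at h5; linarith

lemma treeDist_eq_zero {u v : List Bool} (h : treeDist u v = 0) : u = v := by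
  have h1 : ((lcp u v).length : ℝ) ≤ u.length := by exact_mod_cast lcp_length_le_left u v
  have h2 : ((lcp u v).length : ℝ) ≤ v.length := by exact_mod_cast lcp_length_le_right u v
  simp only [treeDist] at h
  have hu : (lcp u v).length = u.length := by exact_mod_cast (by linarith : ((lcp u v).length : ℝ) = u.length)
  have hv : (lcp u v).length = v.length := by exact_mod_cast (by linarith : ((lcp u v).length : ℝ) = v.length)
  exact ((lcp_prefix_left u v).eq_of_length hu).symm.trans ((lcp_prefix_right u v).eq_of_length hv)

/-- The dyadic tree of depth `N`: binary strings of length at most `N`. -/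
def DyadicTree (N : ℕ) : Type := {l : List Bool // l.length ≤ N}

noncomputable instance (N : ℕ) : MetricSpace (DyadicTree N) where
  dist u v := treeDist u.1 v.1
  dist_self u := treeDist_self u.1
  dist_comm u v := treeDist_comm u.1 v.1
  dist_triangle u v w := treeDist_triangle u.1 v.1 w.1
  eq_of_dist_eq_zero h := Subtype.ext (treeDist_eq_zero h)

/-- The set of leaves of the dyadic tree of depth `N`: binary strings of length
exactly `N`, with the metric `d(u,v) = 2 (N - |u ∧ v|)` induced from the tree metric. -/
def TreeLeaves (N : ℕ) : Type := {l : List Bool // l.length = N}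

noncomputable instance (N : ℕ) : MetricSpace (TreeLeaves N) where
  dist u v := 2 * ((N : ℝ) - (lcp u.1 v.1).length)
  dist_self u := by simp [lcp_self, u.2]
  dist_comm u v := by
    show 2 * ((N : ℝ) - ((lcp u.1 v.1).length : ℝ)) = 2 * ((N : ℝ) - ((lcp v.1 u.1).length : ℝ))
    rw [lcp_comm]
  dist_triangle u v w := by
    have e1 : (2 : ℝ) * ((N : ℝ) - (lcp u.1 w.1).length) = treeDist u.1 w.1 := by
      simp [treeDist, u.2, w.2]; ring
    have e2 : (2 : ℝ) * ((N : ℝ) - (lcp u.1 v.1).length) = treeDist u.1 v.1 := by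
      simp [treeDist, u.2, v.2]; ring
    have e3 : (2 : ℝ) * ((N : ℝ) - (lcp v.1 w.1).length) = treeDist v.1 w.1 := by
      simp [treeDist, v.2, w.2]; ring
    show 2 * ((N : ℝ) - ((lcp u.1 w.1).length : ℝ)) ≤
      2 * ((N : ℝ) - ((lcp u.1 v.1).length : ℝ)) + 2 * ((N : ℝ) - ((lcp v.1 w.1).length : ℝ))
    rw [e1, e2, e3]
    exact treeDist_triangle u.1 v.1 w.1
  eq_of_dist_eq_zero := by
    intro u v h
    replace h : 2 * ((N : ℝ) - ((lcp u.1 v.1).length : ℝ)) = 0 := h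
    have e2 : (2 : ℝ) * ((N : ℝ) - (lcp u.1 v.1).length) = treeDist u.1 v.1 := by
      simp [treeDist, u.2, v.2]; ring
    rw [e2] at h
    exact Subtype.ext (treeDist_eq_zero h)

/-! ### Averages over strings of a fixed length -/

/-- The average of `g` over all binary strings of length `n`. -/
noncomputable def avg : ℕ → (List Bool → ℝ) → ℝ
  | 0, g => g []
  | n + 1, g => (avg n (fun x => g (false :: x)) + avg n (fun x => g (true :: x))) / 2

lemma avg_append (m n : ℕ) (g : List Bool → ℝ) :
    avg (m + n) g = avg m (fun u => avg n (fun x => g (u ++ x))) := by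
  induction m generalizing g with
  | zero => simp [avg]
  | succ m ih => rw [Nat.succ_add]; simp [avg, ih]

lemma avg_add (n : ℕ) (g h : List Bool → ℝ) :
    avg n (fun x => g x + h x) = avg n g + avg n h := by
  induction n generalizing g h with
  | zero => rfl
  | succ n ih => simp only [avg, ih]; ring

lemma avg_const_mul (n : ℕ) (c : ℝ) (g : List Bool → ℝ) :
    avg n (fun x => c * g x) = c * avg n g := by
  induction n generalizing g with
  | zero => rfl
  | succ n ih => simp only [avg, ih]; ring

lemma avg_const (n : ℕ) (c : ℝ) : avg n (fun _ => c) = c := by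
  induction n with
  | zero => rfl
  | succ n ih => simp only [avg, ih]; ring

lemma avg_mono (n : ℕ) {g h : List Bool → ℝ} (hgh : ∀ x, g x ≤ h x) : avg n g ≤ avg n h := by
  induction n generalizing g h with
  | zero => exact hgh []
  | succ n ih =>
    simp only [avg]
    have h1 := ih (fun x => hgh (false :: x))
    have h2 := ih (fun x => hgh (true :: x))
    linarith

lemma avg_length (n : ℕ) : avg n (fun x => (x.length : ℝ)) = n := by
  induction n with
  | zero => simp [avg]
  | succ n ih => simp [avg, avg_add, avg_const, ih]

/-! ### Averaged distances -/

lemma treeDist_nonneg (u v : List Bool) : 0 ≤ treeDist u v := by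
  have h := treeDist_triangle u v u
  rw [treeDist_self, treeDist_comm v u] at h
  linarith

lemma treeDist_append (u x w : List Bool) : treeDist (u ++ x) (u ++ w) = treeDist x w := by
  induction u with
  | nil => rfl
  | cons a u ih =>
    rw [← ih]
    simp only [treeDist, List.cons_append, lcp_cons, if_true, List.length_cons]
    push_cast
    ring

lemma treeDist_cons_of_ne {a b : Bool} (hab : a ≠ b) (x w : List Bool) :
    treeDist (a :: x) (b :: w) = x.length + (w.length + 2) := by
  simp only [treeDist, lcp_cons, if_neg hab, List.length_cons, List.length_nil]
  push_cast
  ring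

/-- Two independent random strings of length `n` are at expected distance at least `n`: with
probability `1/2` they differ in the first letter, and then their distance is `2n`. -/
lemma le_avg_treeDist (n : ℕ) : (n : ℝ) ≤ avg n (fun x => avg n (fun w => treeDist x w)) := by
  cases n with
  | zero => simp [avg, treeDist_self]
  | succ n =>
    have hd : ∀ a b : Bool, a ≠ b →
        avg n (fun x => avg n (fun w => treeDist (a :: x) (b :: w))) = 2 * n + 2 := by
      intro a b hab
      simp only [treeDist_cons_of_ne hab, avg_add, avg_const, avg_length]
      ring
    have hs : ∀ a b : Bool, 0 ≤ avg n (fun x => avg n (fun w => treeDist (a :: x) (b :: w))) := by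
      intro a b
      have := avg_mono n (fun x => avg_mono n (fun w => treeDist_nonneg (a :: x) (b :: w)))
      simpa only [avg_const] using this
    have e : ∀ a : Bool, avg n (fun x => avg (n + 1) (fun w => treeDist (a :: x) w)) =
        2⁻¹ * (avg n (fun x => avg n (fun w => treeDist (a :: x) (false :: w))) +
          avg n (fun x => avg n (fun w => treeDist (a :: x) (true :: w)))) := by
      intro a
      rw [← avg_add, ← avg_const_mul]
      simp only [avg]
      congr 1
      funext x
      ring
    rw [show avg (n + 1) (fun x => avg (n + 1) (fun w => treeDist x w)) =
      (avg n (fun x => avg (n + 1) (fun w => treeDist (false :: x) w)) +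
        avg n (fun x => avg (n + 1) (fun w => treeDist (true :: x) w))) / 2 from rfl, e, e,
      hd false true (by decide), hd true false (by decide)]
    have h1 := hs false false
    have h2 := hs true true
    push_cast
    linarith

/-! ### The weighted family of pairs -/

/-- The sum of `φ` over a weighted family of pairs of vertices in the tree of depth `2 ^ K`: for
each scale `2 ^ k` with `k < K`, and each of the `2 ^ (K - k - 1)` dyadic blocks of `2 ^ (k + 1)`
consecutive levels, take two random vertices in the last level of the block, with a common random
ancestor in its middle level and otherwise independent. The recursion splits the tree of depth
`2 ^ (K + 1)` at its middle level. -/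
noncomputable def pairSum : ℕ → (List Bool → List Bool → ℝ) → ℝ
  | 0, _ => 0
  | K + 1, φ => pairSum K φ + avg (2 ^ K) (fun u => pairSum K (fun x w => φ (u ++ x) (u ++ w))) +
      avg (2 ^ K) (fun u => avg (2 ^ K) (fun x => avg (2 ^ K) (fun w => φ (u ++ x) (u ++ w))))

lemma le_pairSum_treeDist (K : ℕ) : (K : ℝ) * 2 ^ K / 2 ≤ pairSum K treeDist := by
  induction K with
  | zero => simp [pairSum]
  | succ K ih =>
    have h := le_avg_treeDist (2 ^ K)
    have e : (fun x w => treeDist x w) = treeDist := rfl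
    simp only [pairSum, treeDist_append, avg_const, e]
    push_cast at h ⊢
    rw [pow_succ]
    linarith

/-- The mean squared displacement of `f` from the root to a random leaf at depth `2 ^ K`, normalised
by the depth. -/
noncomputable def rootEnergy (K : ℕ) (f : List Bool → ℝ) : ℝ :=
  (2 ^ K)⁻¹ * avg (2 ^ K) (fun x => (f x - f []) ^ 2)

/-- The fork inequality on the line, for a stem `z, y` with two prongs `x` and `w`; it follows from
the parallelogram identity. -/
lemma fork (z y x w : ℝ) : (x - z) ^ 2 + (w - z) ^ 2 + (x - w) ^ 2 / 2 ≤
    2 * (x - y) ^ 2 + 2 * (w - y) ^ 2 + 4 * (y - z) ^ 2 := by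
  nlinarith [sq_nonneg (x + w + 2 * z - 4 * y)]

/-- The averaged fork inequality: passing from depth `2 ^ K` to depth `2 ^ (K + 1)`, the energy drops
by at least a multiple of the mean squared difference over a random pair forking at the middle. -/
lemma rootEnergy_succ (K : ℕ) (f : List Bool → ℝ) :
    rootEnergy (K + 1) f + (8 * 2 ^ K)⁻¹ * avg (2 ^ K) (fun u => avg (2 ^ K) (fun x =>
      avg (2 ^ K) (fun w => (f (u ++ x) - f (u ++ w)) ^ 2))) ≤
    rootEnergy K f + avg (2 ^ K) (fun u => rootEnergy K (fun x => f (u ++ x))) := by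
  set n := 2 ^ K with hn
  have h := avg_mono n (fun u => avg_mono n (fun x => avg_mono n (fun w =>
    fork (f []) (f u) (f (u ++ x)) (f (u ++ w)))))
  simp only [avg_add, avg_const_mul, avg_const, div_eq_inv_mul] at h
  have e1 : rootEnergy (K + 1) f =
      (2 * 2 ^ K)⁻¹ * avg n (fun u => avg n (fun x => (f (u ++ x) - f []) ^ 2)) := by
    rw [rootEnergy, ← avg_append n n (fun x => (f x - f []) ^ 2), ← two_mul, hn, pow_succ', pow_succ']
  have e2 : ∀ u, rootEnergy K (fun x => f (u ++ x)) =
      (2 ^ K)⁻¹ * avg n (fun x => (f (u ++ x) - f u) ^ 2) := by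
    intro u
    simp [rootEnergy, hn]
  simp only [e1, e2, avg_const_mul]
  rw [rootEnergy, ← hn]
  have hp : (0 : ℝ) < 2 ^ K := by positivity
  have h' := mul_le_mul_of_nonneg_left h (by positivity : (0 : ℝ) ≤ (4 * 2 ^ K)⁻¹)
  simp only [mul_inv] at h' ⊢
  linarith

/-- The main estimate: differences of a function that is `1`-Lipschitz along edges are small on
average over the family of pairs. The parameter `s` comes from
`2 |Δ| ≤ s Δ² / 2 ^ k + 2 ^ k / s`, in which the first term is absorbed by the drop in energy. -/
lemma pairSum_abs_le (s : ℝ) (hs : 0 < s) (K : ℕ) (f : List Bool → ℝ)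
    (hf : ∀ u b, |f (u ++ [b]) - f u| ≤ 1) :
    pairSum K (fun x w => |f x - f w|) + 4 * s * rootEnergy K f ≤
      2 ^ K * (4 * s + K / (4 * s)) := by
  induction K generalizing f with
  | zero =>
    have h : ∀ b, (f [b] - f []) ^ 2 ≤ 1 := fun b => (sq_le_one_iff_abs_le_one _).2 (hf [] b)
    have h1 := h true
    have h2 := h false
    have h3 : rootEnergy 0 f ≤ 1 := by
      simp [rootEnergy, avg]
      linarith
    simp only [pairSum]
    norm_num
    nlinarith
  | succ K ih =>
    have htop := ih f hf
    have hbot := avg_mono (2 ^ K) (fun u => ih (fun x => f (u ++ x)) (fun v b => by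
      simpa only [List.append_assoc] using hf (u ++ v) b))
    have hfork := mul_le_mul_of_nonneg_left (rootEnergy_succ K f) (by positivity : 0 ≤ 4 * s)
    have hp : (0 : ℝ) < 2 ^ K := by positivity
    have amgm : ∀ d : ℝ, |d| ≤ s * (2 * 2 ^ K)⁻¹ * d ^ 2 + 2 ^ K / (2 * s) := by
      intro d
      have e : s * (2 * 2 ^ K)⁻¹ * d ^ 2 + 2 ^ K / (2 * s) - |d| =
          (s * |d| - 2 ^ K) ^ 2 / (2 * s * 2 ^ K) := by
        rw [← sq_abs d]
        field_simp
        ring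
      have : 0 ≤ (s * |d| - 2 ^ K) ^ 2 / (2 * s * 2 ^ K) := by positivity
      linarith
    have hnew := avg_mono (2 ^ K) (fun u => avg_mono (2 ^ K) (fun x => avg_mono (2 ^ K) (fun w =>
      amgm (f (u ++ x) - f (u ++ w)))))
    simp only [avg_add, avg_const_mul, avg_const] at hbot hnew
    simp only [pairSum]
    set A := avg (2 ^ K) (fun u => avg (2 ^ K) (fun x =>
      avg (2 ^ K) (fun w => (f (u ++ x) - f (u ++ w)) ^ 2)))
    have e1 : 4 * s * ((8 * 2 ^ K)⁻¹ * A) = s * (2 * 2 ^ K)⁻¹ * A := by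
      field_simp
      ring
    have e2 : (2 : ℝ) ^ (K + 1) * (4 * s + ((K + 1 : ℕ) : ℝ) / (4 * s)) =
        2 * (2 ^ K * (4 * s + K / (4 * s))) + 2 ^ K / (2 * s) := by
      push_cast
      field_simp
      ring
    rw [e2]
    rw [mul_add, e1, mul_add] at hfork
    linarith

/-! ### Realization by lists of pairs -/

/-- The functional `Φ` is, up to a positive integer factor, the sum over a finite list of pairs of
strings of length at most `N`. -/
def Realizable (N : ℕ) (Φ : (List Bool → List Bool → ℝ) → ℝ) : Prop :=
  ∃ W : ℕ, 0 < W ∧ ∃ P : List (List Bool × List Bool),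
    (∀ p ∈ P, p.1.length ≤ N ∧ p.2.length ≤ N) ∧
    ∀ φ, (W : ℝ) * Φ φ = (P.map (fun p => φ p.1 p.2)).sum

lemma Realizable.mono {M N : ℕ} (h : M ≤ N) {Φ} (hΦ : Realizable M Φ) : Realizable N Φ := by
  obtain ⟨W, hW, P, hP, e⟩ := hΦ
  exact ⟨W, hW, P, fun p hp => ⟨(hP p hp).1.trans h, (hP p hp).2.trans h⟩, e⟩

lemma realizable_zero (N : ℕ) : Realizable N (fun _ => 0) := ⟨1, one_pos, [], by simp, by simp⟩

lemma realizable_pair {N : ℕ} {x w : List Bool} (hx : x.length ≤ N) (hw : w.length ≤ N) :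
    Realizable N (fun φ => φ x w) := ⟨1, one_pos, [(x, w)], by simp [hx, hw], by simp⟩

lemma sum_map_flatten_replicate {α : Type*} (n : ℕ) (P : List α) (g : α → ℝ) :
    ((List.replicate n P).flatten.map g).sum = n * (P.map g).sum := by
  induction n with
  | zero => simp
  | succ n ih =>
    rw [List.replicate_succ, List.flatten_cons, List.map_append, List.sum_append, ih]
    push_cast
    ring

lemma Realizable.add {N : ℕ} {Φ Ψ} (hΦ : Realizable N Φ) (hΨ : Realizable N Ψ) :
    Realizable N (fun φ => Φ φ + Ψ φ) := by
  obtain ⟨W, hW, P, hP, e⟩ := hΦ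
  obtain ⟨W', hW', P', hP', e'⟩ := hΨ
  refine ⟨W * W', Nat.mul_pos hW hW',
    (List.replicate W' P).flatten ++ (List.replicate W P').flatten, ?_, ?_⟩
  · intro p hp
    simp only [List.mem_append, List.mem_flatten, List.mem_replicate] at hp
    rcases hp with ⟨l, ⟨_, rfl⟩, h⟩ | ⟨l, ⟨_, rfl⟩, h⟩
    · exact hP p h
    · exact hP' p h
  · intro φ
    rw [List.map_append, List.sum_append, sum_map_flatten_replicate, sum_map_flatten_replicate,
      ← e, ← e']
    push_cast
    ring

lemma Realizable.half {N : ℕ} {Φ} (hΦ : Realizable N Φ) : Realizable N (fun φ => Φ φ / 2) := by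
  obtain ⟨W, hW, P, hP, e⟩ := hΦ
  refine ⟨2 * W, by omega, P, hP, fun φ => ?_⟩
  rw [← e]
  push_cast
  ring

lemma Realizable.translate {N : ℕ} {Φ} (hΦ : Realizable N Φ) (u : List Bool) :
    Realizable (u.length + N) (fun φ => Φ (fun x w => φ (u ++ x) (u ++ w))) := by
  obtain ⟨W, hW, P, hP, e⟩ := hΦ
  refine ⟨W, hW, P.map (fun p => (u ++ p.1, u ++ p.2)), ?_, fun φ => ?_⟩
  · intro p hp
    obtain ⟨q, hq, rfl⟩ := List.mem_map.1 hp
    have := hP q hq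
    simp only [List.length_append]
    omega
  · rw [e, List.map_map]
    rfl

lemma realizable_avg {N : ℕ} (n : ℕ) (Φ : List Bool → (List Bool → List Bool → ℝ) → ℝ)
    (h : ∀ u, u.length = n → Realizable N (Φ u)) :
    Realizable N (fun φ => avg n (fun u => Φ u φ)) := by
  induction n generalizing Φ with
  | zero => exact h [] rfl
  | succ n ih =>
    exact ((ih (fun u => Φ (false :: u)) (fun u hu => h _ (by simp [hu]))).add
      (ih (fun u => Φ (true :: u)) (fun u hu => h _ (by simp [hu])))).half

lemma realizable_pairSum (K : ℕ) : Realizable (2 ^ K) (pairSum K) := by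
  induction K with
  | zero => exact realizable_zero _
  | succ K ih =>
    have h2 : 2 ^ (K + 1) = 2 ^ K + 2 ^ K := by ring
    refine ((ih.mono (h2 ▸ Nat.le_add_right _ _)).add (realizable_avg _ _ fun u hu => ?_)).add
      (realizable_avg _ _ fun u hu => realizable_avg _ _ fun x hx => realizable_avg _ _ fun w hw =>
        realizable_pair ?_ ?_)
    · exact (ih.translate u).mono (by omega)
    · rw [List.length_append]; omega
    · rw [List.length_append]; omega

/-! ### From families of pairs to paths -/

lemma var_step {M : Type*} [PseudoEMetricSpace M] (g : ℕ → M) (L : ℕ) :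
    Var 0 1 (fun t : ℝ => g ⌊(L : ℝ) * t⌋₊) =
      ∑ j ∈ Finset.range L, edist (g j) (g (j + 1)) := by
  have hmono : MonotoneOn (fun t : ℝ => ⌊(L : ℝ) * t⌋₊) (Set.Icc 0 1) := fun s _ t _ hst =>
    Nat.floor_le_floor (mul_le_mul_of_nonneg_left hst (Nat.cast_nonneg L))
  have himage : (fun t : ℝ => ⌊(L : ℝ) * t⌋₊) '' Set.Icc 0 1 = id '' Set.Iic L := by
    ext j
    simp only [Set.mem_image, Set.mem_Icc, id, exists_eq_right, Set.mem_Iic]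
    constructor
    · rintro ⟨t, ⟨_, ht1⟩, rfl⟩
      exact (Nat.floor_le_floor (mul_le_of_le_one_right (Nat.cast_nonneg L) ht1)).trans
        (Nat.floor_natCast L).le
    · intro hj
      rcases Nat.eq_zero_or_pos L with rfl | hL
      · exact ⟨0, by simp, by simp; omega⟩
      · have hL' : (0 : ℝ) < L := by exact_mod_cast hL
        have hj' : (j : ℝ) ≤ L := by exact_mod_cast hj
        refine ⟨j / L, ⟨by positivity, (div_le_one hL').2 hj'⟩, ?_⟩
        rw [mul_div_cancel₀ _ hL'.ne', Nat.floor_natCast]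
  have h := eVariationOn.comp_eq_of_monotoneOn g _ hmono
  rw [himage, eVariationOn.image_range_of_monotone g monotone_id] at h
  exact h

/-- The sequence that jumps back and forth between `p i` and `q i`, making `2 m + 1` such jumps,
then moves on from `q i` to `p (i + 1)`. -/
def zigzag {M : Type*} (m : ℕ) (p q : ℕ → M) (j : ℕ) : M :=
  if j % 2 = 0 then p (j / (2 * m + 2)) else q (j / (2 * m + 2))

lemma zigzag_block {M : Type*} (m : ℕ) (p q : ℕ → M) (i r : ℕ) (hr : r < 2 * m + 2) :
    zigzag m p q ((2 * m + 2) * i + r) = if r % 2 = 0 then p i else q i := by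
  have h1 : ((2 * m + 2) * i + r) / (2 * m + 2) = i := by
    rw [Nat.mul_add_div (by omega), Nat.div_eq_of_lt hr, add_zero]
  have h2 : ((2 * m + 2) * i + r) % 2 = r % 2 := by
    rw [show (2 * m + 2) * i + r = r + 2 * ((m + 1) * i) by ring, Nat.add_mul_mod_self_left]
  rw [zigzag, h1, h2]

lemma sum_dist_zigzag {M : Type*} [PseudoMetricSpace M] (m : ℕ) (p q : ℕ → M) (n : ℕ) :
    ∑ j ∈ Finset.range ((2 * m + 2) * n), dist (zigzag m p q j) (zigzag m p q (j + 1)) =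
      (2 * m + 1) * ∑ i ∈ Finset.range n, dist (p i) (q i) +
        ∑ i ∈ Finset.range n, dist (q i) (p (i + 1)) := by
  induction n with
  | zero => simp
  | succ n ih =>
    rw [Nat.mul_succ, Finset.sum_range_add, ih, Finset.sum_range_succ _ n,
      Finset.sum_range_succ _ n, show 2 * m + 2 = (2 * m + 1) + 1 from rfl, Finset.sum_range_succ]
    have hlast : dist (zigzag m p q ((2 * m + 1 + 1) * n + (2 * m + 1)))
        (zigzag m p q ((2 * m + 1 + 1) * n + (2 * m + 1) + 1)) = dist (q n) (p (n + 1)) := by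
      have e := zigzag_block m p q (n + 1) 0 (by omega)
      rw [show (2 * m + 1 + 1) * n + (2 * m + 1) + 1 = (2 * m + 2) * (n + 1) + 0 by ring, e,
        zigzag_block m p q n (2 * m + 1) (by omega), if_neg (by omega), if_pos rfl]
    have hin : ∀ r ∈ Finset.range (2 * m + 1), dist (zigzag m p q ((2 * m + 1 + 1) * n + r))
        (zigzag m p q ((2 * m + 1 + 1) * n + r + 1)) = dist (p n) (q n) := by
      intro r hr
      have hr' := Finset.mem_range.1 hr
      rw [add_assoc _ r 1, zigzag_block m p q n r (by omega),
        zigzag_block m p q n (r + 1) (by omega)]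
      rcases Nat.mod_two_eq_zero_or_one r with h | h
      · rw [if_pos h, if_neg (by omega)]
      · rw [if_neg (by omega), if_pos (by omega), dist_comm]
    rw [hlast, Finset.sum_congr rfl hin, Finset.sum_const, Finset.card_range, nsmul_eq_mul]
    push_cast
    ring

lemma var_zigzag {M : Type*} [PseudoMetricSpace M] (m : ℕ) (p q : ℕ → M) (n : ℕ) :
    Var 0 1 (fun t : ℝ => zigzag m p q ⌊(((2 * m + 2) * n : ℕ) : ℝ) * t⌋₊) =
      ENNReal.ofReal ((2 * m + 1) * ∑ i ∈ Finset.range n, dist (p i) (q i) +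
        ∑ i ∈ Finset.range n, dist (q i) (p (i + 1))) := by
  rw [var_step, ← sum_dist_zigzag, ENNReal.ofReal_sum_of_nonneg (fun _ _ => dist_nonneg)]
  simp only [edist_dist]

/-- A finite family of pairs on which all `1`-Lipschitz functions have small total oscillation yields
a path with small Lipschitz variation: traverse each pair so many times that the cost of moving
from one pair to the next is negligible. -/
lemma exists_path {M : Type*} [PseudoMetricSpace M] (n : ℕ) (p q : ℕ → M) (ε : ℝ) (hε : 0 < ε)
    (hpos : 0 < ∑ i ∈ Finset.range n, dist (p i) (q i))
    (hf : ∀ f : M → ℝ, LipschitzWith 1 f → ∑ i ∈ Finset.range n, |f (p i) - f (q i)| ≤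
      ε * ∑ i ∈ Finset.range n, dist (p i) (q i)) :
    ∃ γ : ℝ → M, 0 < Var 0 1 γ ∧ Var 0 1 γ < ⊤ ∧
      LVar 0 1 γ ≤ ENNReal.ofReal (2 * ε) * Var 0 1 γ := by
  set S := ∑ i ∈ Finset.range n, dist (p i) (q i) with hS
  set T := ∑ i ∈ Finset.range n, dist (q i) (p (i + 1)) with hT
  have hT0 : 0 ≤ T := Finset.sum_nonneg fun _ _ => dist_nonneg
  obtain ⟨m, hm⟩ := exists_nat_ge (T / (ε * S))
  rw [div_le_iff₀ (by positivity)] at hm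
  have hεS : 0 < ε * S := by positivity
  refine ⟨fun t : ℝ => zigzag m p q ⌊(((2 * m + 2) * n : ℕ) : ℝ) * t⌋₊, ?_, ?_, ?_⟩
  · rw [var_zigzag, ENNReal.ofReal_pos]
    positivity
  · rw [var_zigzag]
    exact ENNReal.ofReal_lt_top
  · refine iSup_le fun f => ?_
    have hcomp : (f.1 ∘ fun t : ℝ => zigzag m p q ⌊(((2 * m + 2) * n : ℕ) : ℝ) * t⌋₊) =
        fun t : ℝ => zigzag m (f.1 ∘ p) (f.1 ∘ q) ⌊(((2 * m + 2) * n : ℕ) : ℝ) * t⌋₊ := by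
      funext t
      simp only [Function.comp, zigzag, apply_ite f.1]
    rw [hcomp, var_zigzag, var_zigzag, ← ENNReal.ofReal_mul (by positivity), ← hS, ← hT]
    refine ENNReal.ofReal_le_ofReal ?_
    have h1 : ∑ i ∈ Finset.range n, dist ((f.1 ∘ p) i) ((f.1 ∘ q) i) ≤ ε * S := by
      simpa only [Real.dist_eq, Function.comp] using hf f.1 f.2
    have h2 : ∑ i ∈ Finset.range n, dist ((f.1 ∘ q) i) ((f.1 ∘ p) (i + 1)) ≤ T :=
      Finset.sum_le_sum fun i _ => by simpa using f.2.dist_le_mul (q i) (p (i + 1))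
    have h3 := mul_le_mul_of_nonneg_left h1 (by positivity : (0 : ℝ) ≤ 2 * m + 1)
    have h4 : 0 ≤ ε * T := by positivity
    nlinarith

lemma sum_map_eq_sum_range {α : Type*} (P : List α) (d : α) (g : α → ℝ) :
    (P.map g).sum = ∑ i ∈ Finset.range P.length, g (P.getD i d) := by
  induction P with
  | nil => simp
  | cons a P ih => simp [Finset.sum_range_succ', ih, add_comm]

/-! ### The dyadic tree -/

/-- Truncation of a string to its first `N` letters, as a vertex of the tree of depth `N`. -/
def trunc (N : ℕ) (u : List Bool) : DyadicTree N := ⟨u.take N, by simp⟩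

lemma dist_trunc {N : ℕ} {u v : List Bool} (hu : u.length ≤ N) (hv : v.length ≤ N) :
    dist (trunc N u) (trunc N v) = treeDist u v := by
  change treeDist (u.take N) (v.take N) = _
  rw [List.take_of_length_le hu, List.take_of_length_le hv]

lemma dist_trunc_edge (N : ℕ) (u : List Bool) (b : Bool) :
    dist (trunc N (u ++ [b])) (trunc N u) ≤ 1 := by
  by_cases h : u.length < N
  · rw [dist_trunc (by simp; omega) h.le]
    have := treeDist_append u [b] []
    rw [List.append_nil] at this
    rw [this]
    simp [treeDist, lcp_nil_right]
  · have : trunc N (u ++ [b]) = trunc N u :=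
      Subtype.ext (List.take_append_of_le_length (by omega))
    rw [this, dist_self]
    exact zero_le_one

lemma exists_path_tree (N K : ℕ) (hK : 0 < K) (hN : 2 ^ K ≤ N) :
    ∃ γ : ℝ → DyadicTree N, 0 < Var 0 1 γ ∧ Var 0 1 γ < ⊤ ∧
      LVar 0 1 γ ≤ ENNReal.ofReal (2 * (4 / √K)) * Var 0 1 γ := by
  obtain ⟨W, hW, P, hP, hsum⟩ := (realizable_pairSum K).mono hN
  have hW' : (0 : ℝ) < W := by exact_mod_cast hW
  have hK' : (0 : ℝ) < K := by exact_mod_cast hK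
  have hsq : 0 < √(K : ℝ) := Real.sqrt_pos.2 hK'
  have hss : √(K : ℝ) * √K = K := Real.mul_self_sqrt hK'.le
  have hD : ∑ i ∈ Finset.range P.length,
      dist (trunc N (P.getD i ([], [])).1) (trunc N (P.getD i ([], [])).2) =
        W * pairSum K treeDist := by
    rw [← sum_map_eq_sum_range P ([], []) (fun x => dist (trunc N x.1) (trunc N x.2)), hsum]
    congr 1
    exact List.map_congr_left fun x hx => dist_trunc (hP x hx).1 (hP x hx).2
  have hlow := le_pairSum_treeDist K
  have hp : (0 : ℝ) < K * 2 ^ K / 2 := by positivity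
  refine exists_path P.length (fun i => trunc N (P.getD i ([], [])).1)
    (fun i => trunc N (P.getD i ([], [])).2) (4 / √K) (by positivity) ?_ ?_
  · rw [hD]
    exact mul_pos hW' (hp.trans_le hlow)
  · intro f hf
    rw [hD, ← sum_map_eq_sum_range P ([], []) (fun x => |f (trunc N x.1) - f (trunc N x.2)|),
      ← hsum (fun x w => |f (trunc N x) - f (trunc N w)|), mul_left_comm]
    refine mul_le_mul_of_nonneg_left ?_ (Nat.cast_nonneg W)
    -- The choice `s = √K / 4` balances the two terms of the bound.
    have h := pairSum_abs_le (√K / 4) (by positivity) K (fun u => f (trunc N u)) (fun u b => by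
      have h1 := hf.dist_le_mul (trunc N (u ++ [b])) (trunc N u)
      rw [Real.dist_eq, NNReal.coe_one, one_mul] at h1
      exact h1.trans (dist_trunc_edge N u b))
    have hV : 0 ≤ rootEnergy K (fun u => f (trunc N u)) := by
      have := avg_mono (2 ^ K) (fun x => sq_nonneg (f (trunc N x) - f (trunc N [])))
      rw [avg_const] at this
      exact mul_nonneg (by positivity) this
    have e : (2 : ℝ) ^ K * (4 * (√K / 4) + K / (4 * (√K / 4))) = 4 / √K * (K * 2 ^ K / 2) := by
      field_simp
      rw [sq, hss]
      ring
    calc _ ≤ (2 : ℝ) ^ K * (4 * (√K / 4) + K / (4 * (√K / 4))) := by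
          have : 0 ≤ 4 * (√K / 4) * rootEnergy K (fun u => f (trunc N u)) := by positivity
          linarith
      _ = 4 / √K * (K * 2 ^ K / 2) := e
      _ ≤ _ := mul_le_mul_of_nonneg_left hlow (by positivity)

/-- There is a universal constant `C > 0` such that for every `N ≥ 2` the dyadic tree
of depth `N` admits a map `γ : [0,1] → 𝒯_N` with `0 < Var γ < ∞` and
`LVar γ ≤ C (log N)^{-1/2} Var γ`; in particular `LCJ 𝒯_N ≤ C (log N)^{-1/2}`. -/
theorem lcj_dyadic_tree_upper : ∃ C : ℝ, 0 < C ∧ ∀ N : ℕ, 2 ≤ N →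
    (∃ γ : ℝ → DyadicTree N,
      0 < Var 0 1 γ ∧ Var 0 1 γ < ⊤ ∧
      LVar 0 1 γ ≤ ENNReal.ofReal (C / Real.sqrt (Real.log N)) * Var 0 1 γ) ∧
    LCJ (DyadicTree N) ≤ ENNReal.ofReal (C / Real.sqrt (Real.log N)) := by
  refine ⟨12, by norm_num, fun N hN => ?_⟩
  have hpath : ∃ γ : ℝ → DyadicTree N, 0 < Var 0 1 γ ∧ Var 0 1 γ < ⊤ ∧
      LVar 0 1 γ ≤ ENNReal.ofReal (12 / Real.sqrt (Real.log N)) * Var 0 1 γ := by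
    set K := Nat.log 2 N with hKdef
    have hK : 0 < K := Nat.log_pos one_lt_two hN
    obtain ⟨γ, h0, h1, h2⟩ := exists_path_tree N K hK (Nat.pow_log_le_self 2 (by omega))
    refine ⟨γ, h0, h1, h2.trans ?_⟩
    gcongr
    have hK1 : (1 : ℝ) ≤ K := by exact_mod_cast hK
    have hlog : 0 < Real.log N := Real.log_pos (by exact_mod_cast hN)
    have hub : Real.log N ≤ 2 * K := by
      have hlt : (N : ℝ) ≤ 2 ^ (K + 1) := by
        exact_mod_cast (Nat.lt_pow_succ_log_self one_lt_two N).le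
      have h3 := Real.log_le_log (by exact_mod_cast (by omega : 0 < N)) hlt
      rw [Real.log_pow] at h3
      push_cast at h3
      have h4 : Real.log 2 ≤ 1 := by linarith [Real.log_two_lt_d9]
      nlinarith
    have hsl : 0 < √(Real.log N) := Real.sqrt_pos.2 hlog
    have hsK : 0 < √(K : ℝ) := Real.sqrt_pos.2 (by linarith)
    have h5 : √(Real.log N) ≤ 3 / 2 * √(K : ℝ) := by
      rw [Real.sqrt_le_left (by positivity), mul_pow, Real.sq_sqrt (by linarith)]
      linarith
    rw [← mul_div_assoc, div_le_div_iff₀ hsK hsl]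
    linarith
  refine ⟨hpath, ?_⟩
  obtain ⟨γ, h0, h1, h2⟩ := hpath
  refine (iInf₂_le (0 : ℝ) (1 : ℝ)).trans ((iInf₂_le one_pos γ).trans ((iInf₂_le h0 h1).trans ?_))
  exact ENNReal.div_le_of_le_mul h2
end

section
/- There exists a universal constant c > 0 with the following property. For every integer N ≥ 1, let ℒ_N be the set of leaves of the complete rooted binary tree of depth N, i.e., the set of binary strings of length exactly N, equipped with the metric induced from the tree metric: d(u,v) = 2(N − |u ∧ v|) for u ≠ v, where u ∧ v is the longest common prefix of u and v. Then for every a < b and every map γ : [a,b] → ℒ_N, c · Var_γ ≤ LVar_γ. In particular, LCJ(ℒ_N) ≥ c uniformly in N. -/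
/-!
The constant `1 / 8` works, by averaging over random `1`-Lipschitz functions. Attach an
independent random sign `ε (j, p)` to every scale `j` and every vertex `p` of the tree, and put
`f u = ½ ∑ j, 2 ^ j ε (j, p_j u)`, where `p_j u` is the ancestor of the leaf `u` at height
`2 ^ j - 1`. If `u` and `v` branch at height `h`, so that `d(u, v) = 2 h`, only the scales with
`2 ^ j ≤ h` contribute to `f u - f v`; a geometric sum bounds the difference by `2 h`, so every `f`
is `1`-Lipschitz (`multiscale_lipschitz`). At the largest such scale `h < 2 * 2 ^ j`, and flipping
the one sign `ε (j, p_j u)` moves `f u - f v` by `2 ^ j`; hence `|f u - f v|` has mean at least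
`2 ^ j / 2 ≥ h / 4 = d(u, v) / 8` (`sum_abs_multiscale_ge`).

Summing the mean over consecutive points of a partition, some choice of signs captures `1 / 8` of
the partition sum of `γ` (`exists_multiscale_sum_ge`), and the supremum over partitions gives the
claim.
-/

open Set ENNReal

/-! ### Prefixes and the leaf metric -/

lemma take_eq_take_iff_le_lcp : ∀ (u v : List Bool) (k : ℕ), k ≤ u.length → k ≤ v.length →
    (u.take k = v.take k ↔ k ≤ (lcp u v).length)
  | _, _, 0, _, _ => by simp
  | [], _, k + 1, hu, _ => by simp at hu
  | _ :: _, [], k + 1, _, hv => by simp at hv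
  | a :: u, b :: v, k + 1, hu, hv => by
    have ih := take_eq_take_iff_le_lcp u v k (by simpa using hu) (by simpa using hv)
    by_cases h : a = b
    · subst h
      simp [lcp_cons, ih]
    · simp [lcp_cons, h]

lemma TreeLeaves.dist_def {N : ℕ} (u v : TreeLeaves N) :
    dist u v = 2 * ((N : ℝ) - (lcp u.1 v.1).length) := rfl

instance (N : ℕ) : Finite (DyadicTree N) :=
  (List.finite_length_le Bool N).to_subtype

/-- The ancestor of the leaf `u` at height `2 ^ j - 1`, i.e. its prefix of length
`N + 1 - 2 ^ j`. Truncated subtraction makes this the root once `2 ^ j > N`. -/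
def ancestor {N : ℕ} (j : ℕ) (u : TreeLeaves N) : DyadicTree N :=
  ⟨u.1.take (N + 1 - 2 ^ j), by rw [List.length_take, u.2]; exact min_le_right _ _⟩

/-- Two leaves are separated at scale `j` exactly when their distance is at least `2 * 2 ^ j`. -/
lemma ancestor_ne_iff {N : ℕ} (j : ℕ) (u v : TreeLeaves N) :
    ancestor j u ≠ ancestor j v ↔ 2 ^ j ≤ N - (lcp u.1 v.1).length := by
  have hpos : 0 < 2 ^ j := by positivity
  have h := take_eq_take_iff_le_lcp u.1 v.1 (N + 1 - 2 ^ j) (by rw [u.2]; omega)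
    (by rw [v.2]; omega)
  have h' : ancestor j u = ancestor j v ↔
      u.1.take (N + 1 - 2 ^ j) = v.1.take (N + 1 - 2 ^ j) := Subtype.ext_iff
  rw [Ne, h', h]
  omega

/-! ### Random multiscale functions -/

/-- The sign `±1` encoded by a Boolean. -/
def boolSign (x : Bool) : ℝ := if x then 1 else -1

lemma abs_boolSign_sub_le (x y : Bool) : |boolSign x - boolSign y| ≤ 2 := by
  cases x <;> cases y <;> norm_num [boolSign]

lemma abs_boolSign_sub_not (x : Bool) : |boolSign x - boolSign (!x)| = 2 := by
  cases x <;> norm_num [boolSign]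

/-- A choice of signs, one for each scale `j < N` and each vertex of the tree. -/
abbrev SignChoice (N : ℕ) : Type := Fin N × DyadicTree N → Bool

/-- The function `u ↦ ½ ∑ j, 2 ^ j ε (j, ancestor j u)` on the leaves. The factor `½` makes it
`1`-Lipschitz. -/
noncomputable def multiscale {N : ℕ} (ε : SignChoice N) (u : TreeLeaves N) : ℝ :=
  (∑ j : Fin N, (2 : ℝ) ^ (j : ℕ) * boolSign (ε (j, ancestor j u))) / 2

lemma sum_dyadic_le (h n : ℕ) :
    (∑ j ∈ Finset.range n, if 2 ^ j ≤ h then 2 ^ j else 0) ≤ min (2 ^ n) (2 * h) := by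
  induction n with
  | zero => simp
  | succ n ih =>
    rw [Finset.sum_range_succ, pow_succ]
    split_ifs with hn <;> omega

lemma multiscale_lipschitz {N : ℕ} (ε : SignChoice N) : LipschitzWith 1 (multiscale ε) := by
  refine LipschitzWith.of_dist_le_mul fun u v => ?_
  set h := N - (lcp u.1 v.1).length with hh
  have hle : (lcp u.1 v.1).length ≤ N := (lcp_length_le_left u.1 v.1).trans_eq u.2
  have hd : dist u v = 2 * (h : ℝ) := by
    rw [TreeLeaves.dist_def, hh, Nat.cast_sub hle]
  have hterm : ∀ j : Fin N, |(2 : ℝ) ^ (j : ℕ) * boolSign (ε (j, ancestor j u)) -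
      (2 : ℝ) ^ (j : ℕ) * boolSign (ε (j, ancestor j v))| ≤
      2 * (if 2 ^ (j : ℕ) ≤ h then (2 : ℝ) ^ (j : ℕ) else 0) := by
    intro j
    rw [← mul_sub, abs_mul, abs_of_pos (by positivity : (0 : ℝ) < 2 ^ (j : ℕ))]
    split_ifs with hj
    · rw [mul_comm]
      exact mul_le_mul_of_nonneg_right (abs_boolSign_sub_le _ _) (by positivity)
    · have heq : ancestor (j : ℕ) u = ancestor (j : ℕ) v := by
        by_contra hne
        exact hj ((ancestor_ne_iff _ u v).1 hne)
      simp [heq]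
  have hsum : (∑ j : Fin N, if 2 ^ (j : ℕ) ≤ h then (2 : ℝ) ^ (j : ℕ) else 0) ≤ 2 * h := by
    rw [Fin.sum_univ_eq_sum_range (fun j => if 2 ^ j ≤ h then (2 : ℝ) ^ j else 0)]
    exact_mod_cast (sum_dyadic_le h N).trans (min_le_right _ _)
  rw [Real.dist_eq, multiscale, multiscale, ← sub_div, ← Finset.sum_sub_distrib, abs_div, hd]
  have habs := (Finset.abs_sum_le_sum_abs (fun j : Fin N =>
    (2 : ℝ) ^ (j : ℕ) * boolSign (ε (j, ancestor j u)) -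
      (2 : ℝ) ^ (j : ℕ) * boolSign (ε (j, ancestor j v))) Finset.univ).trans
    (Finset.sum_le_sum fun j _ => hterm j)
  rw [← Finset.mul_sum] at habs
  rw [abs_two, NNReal.coe_one]
  linarith

/-- The sign choice `ε` with the single sign at index `i` flipped. -/
noncomputable def flipAt {ι : Type*} (i : ι) (ε : ι → Bool) : ι → Bool :=
  open Classical in Function.update ε i (!ε i)

lemma flipAt_involutive {ι : Type*} (i : ι) : Function.Involutive (flipAt i) := by
  intro ε
  simp [flipAt]

lemma flipAt_same {ι : Type*} (i : ι) (ε : ι → Bool) : flipAt i ε i = !ε i := by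
  simp [flipAt]

lemma flipAt_of_ne {ι : Type*} {i k : ι} (h : k ≠ i) (ε : ι → Bool) : flipAt i ε k = ε k := by
  simp [flipAt, h]

/-- If flipping one sign always moves `F` by at least `t`, then the mean of `|F|` is at least
`t / 2`: pair each sign choice with its flip. -/
lemma sum_abs_ge_of_flip {ι : Type*} [Fintype (ι → Bool)] (i : ι) (F : (ι → Bool) → ℝ) (t : ℝ)
    (hF : ∀ ε, t ≤ |F ε - F (flipAt i ε)|) :
    Fintype.card (ι → Bool) * (t / 2) ≤ ∑ ε, |F ε| := by
  have hflip : ∑ ε, |F (flipAt i ε)| = ∑ ε, |F ε| :=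
    Equiv.sum_comp (flipAt_involutive i).toPerm fun ε => |F ε|
  have h : ∑ _ε : ι → Bool, t ≤ ∑ ε, (|F ε| + |F (flipAt i ε)|) :=
    Finset.sum_le_sum fun ε _ => (hF ε).trans (abs_sub _ _)
  rw [Finset.sum_add_distrib, hflip, Finset.sum_const, Finset.card_univ, nsmul_eq_mul] at h
  linarith

/-- Averaged over all sign choices, a multiscale function separates two leaves by a fixed
fraction of their distance. The sign that gets flipped sits at the coarsest scale separating
the two leaves. -/
lemma sum_abs_multiscale_ge {N : ℕ} [Fintype (SignChoice N)] (u v : TreeLeaves N) :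
    Fintype.card (SignChoice N) * (1 / 8 * dist u v) ≤
      ∑ ε : SignChoice N, |multiscale ε u - multiscale ε v| := by
  set h := N - (lcp u.1 v.1).length with hh
  have hle : (lcp u.1 v.1).length ≤ N := (lcp_length_le_left u.1 v.1).trans_eq u.2
  have hd : dist u v = 2 * (h : ℝ) := by
    rw [TreeLeaves.dist_def, hh, Nat.cast_sub hle]
  rcases Nat.eq_zero_or_pos h with h0 | hpos
  · rw [hd, h0]
    simpa using Finset.sum_nonneg fun (ε : SignChoice N) _ =>
      abs_nonneg (multiscale ε u - multiscale ε v)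
  have hlog : 2 ^ Nat.log 2 h ≤ h := Nat.pow_log_le_self 2 hpos.ne'
  have hlog' : h < 2 ^ (Nat.log 2 h + 1) := Nat.lt_pow_succ_log_self one_lt_two h
  have hN : Nat.log 2 h < N :=
    ((Nat.lt_two_pow_self).trans_le hlog).trans_le (by omega)
  let j : Fin N := ⟨Nat.log 2 h, hN⟩
  have hne : ancestor (j : ℕ) u ≠ ancestor (j : ℕ) v := (ancestor_ne_iff _ u v).2 hlog
  have hv : ∀ ε : SignChoice N,
      multiscale (flipAt (j, ancestor (j : ℕ) u) ε) v = multiscale ε v := by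
    intro ε
    unfold multiscale
    congr 1
    refine Finset.sum_congr rfl fun k _ => ?_
    rw [flipAt_of_ne]
    intro hk
    obtain ⟨rfl, h2⟩ := Prod.mk.inj hk
    exact hne h2.symm
  have hu : ∀ ε : SignChoice N,
      |multiscale ε u - multiscale (flipAt (j, ancestor (j : ℕ) u) ε) u| = 2 ^ (j : ℕ) := by
    intro ε
    rw [multiscale, multiscale, ← sub_div, ← Finset.sum_sub_distrib,
      Finset.sum_eq_single_of_mem j (Finset.mem_univ j), flipAt_same, ← mul_sub, abs_div,
      abs_mul, abs_boolSign_sub_not]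
    · simp
    · intro k _ hk
      rw [flipAt_of_ne, sub_self]
      exact fun hk' => hk (Prod.mk.inj hk').1
  have key := sum_abs_ge_of_flip (j, ancestor (j : ℕ) u)
    (fun ε : SignChoice N => multiscale ε u - multiscale ε v) (2 ^ (j : ℕ)) (by
      intro ε
      rw [hv, sub_sub_sub_cancel_right, hu])
  refine le_trans (mul_le_mul_of_nonneg_left ?_ (Nat.cast_nonneg _)) key
  have h2 : (h : ℝ) ≤ 2 ^ (j : ℕ) * 2 := by
    have : h ≤ 2 ^ (j : ℕ) * 2 := by rw [← pow_succ]; exact hlog'.le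
    exact_mod_cast this
  rw [hd]
  linarith

/-! ### Variation -/

/-- For any finite sequence of leaves, one sign choice does at least as well as the average. -/
lemma exists_multiscale_sum_ge {N : ℕ} (x : ℕ → TreeLeaves N) (n : ℕ) :
    ∃ ε : SignChoice N, 1 / 8 * ∑ i ∈ Finset.range n, dist (x (i + 1)) (x i) ≤
      ∑ i ∈ Finset.range n, dist (multiscale ε (x (i + 1))) (multiscale ε (x i)) := by
  let _ : Fintype (SignChoice N) := Fintype.ofFinite _
  have h : ∑ _ε : SignChoice N, (1 / 8 * ∑ i ∈ Finset.range n, dist (x (i + 1)) (x i)) ≤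
      ∑ ε : SignChoice N, ∑ i ∈ Finset.range n,
        dist (multiscale ε (x (i + 1))) (multiscale ε (x i)) := by
    rw [Finset.sum_comm, Finset.sum_const, Finset.card_univ, nsmul_eq_mul, Finset.mul_sum,
      Finset.mul_sum]
    exact Finset.sum_le_sum fun i _ => sum_abs_multiscale_ge _ _
  obtain ⟨ε, -, hε⟩ := Finset.exists_le_of_sum_le Finset.univ_nonempty h
  exact ⟨ε, hε⟩

lemma var_le_lvar {N : ℕ} (a b : ℝ) (γ : ℝ → TreeLeaves N) :
    ENNReal.ofReal (1 / 8) * Var a b γ ≤ LVar a b γ := by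
  rw [Var, eVariationOn, ENNReal.mul_iSup]
  refine iSup_le fun p => ?_
  obtain ⟨ε, hε⟩ := exists_multiscale_sum_ge (fun i => γ (p.2.1 i)) p.1
  calc ENNReal.ofReal (1 / 8) * ∑ i ∈ Finset.range p.1, edist (γ (p.2.1 (i + 1))) (γ (p.2.1 i))
      = ENNReal.ofReal
          (1 / 8 * ∑ i ∈ Finset.range p.1, dist (γ (p.2.1 (i + 1))) (γ (p.2.1 i))) := by
        rw [ENNReal.ofReal_mul (by norm_num), ENNReal.ofReal_sum_of_nonneg fun _ _ => dist_nonneg]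
        simp only [edist_dist]
    _ ≤ ENNReal.ofReal (∑ i ∈ Finset.range p.1,
          dist (multiscale ε (γ (p.2.1 (i + 1)))) (multiscale ε (γ (p.2.1 i)))) :=
        ENNReal.ofReal_le_ofReal hε
    _ = ∑ i ∈ Finset.range p.1,
          edist ((multiscale ε ∘ γ) (p.2.1 (i + 1))) ((multiscale ε ∘ γ) (p.2.1 i)) := by
        rw [ENNReal.ofReal_sum_of_nonneg fun _ _ => dist_nonneg]
        simp only [edist_dist, Function.comp_apply]
    _ ≤ Var a b (multiscale ε ∘ γ) :=
        le_iSup (fun q : ℕ × { w : ℕ → ℝ // Monotone w ∧ ∀ i, w i ∈ Set.Icc a b } =>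
          ∑ i ∈ Finset.range q.1,
            edist ((multiscale ε ∘ γ) (q.2.1 (i + 1))) ((multiscale ε ∘ γ) (q.2.1 i))) p
    _ ≤ LVar a b γ :=
        le_iSup (fun f : {f : TreeLeaves N → ℝ // LipschitzWith 1 f} => Var a b (f.1 ∘ γ))
          ⟨multiscale ε, multiscale_lipschitz ε⟩

/-- There is a universal constant `c > 0` such that for every `N ≥ 1`, on the set of
leaves of the dyadic tree of depth `N`, `c ⬝ Var γ ≤ LVar γ` for every map
`γ : [a,b] → ℒ_N`; in particular `LCJ ℒ_N ≥ c` uniformly in `N`. -/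
theorem lcj_tree_leaves_lower : ∃ c : ℝ, 0 < c ∧ ∀ N : ℕ, 1 ≤ N →
    (∀ (a b : ℝ), a < b → ∀ γ : ℝ → TreeLeaves N,
      ENNReal.ofReal c * Var a b γ ≤ LVar a b γ) ∧
    ENNReal.ofReal c ≤ LCJ (TreeLeaves N) := by
  refine ⟨1 / 8, by norm_num, fun N _ => ⟨fun a b _ γ => var_le_lvar a b γ, ?_⟩⟩
  refine le_iInf fun a => le_iInf fun b => le_iInf fun _ => le_iInf fun γ => le_iInf fun h0 =>
    le_iInf fun h1 => ?_
  rw [ENNReal.le_div_iff_mul_le (Or.inl h0.ne') (Or.inl h1.ne)]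
  exact var_le_lvar a b γ
end
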